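/- Let (Σ, ḡ, π̄) be an asymptotically flat initial data set and assume there exists r₁ > r₀ such that (ḡ, π̄) is analytic on Σ ∩ {r₀ ≤ r < r₁} (analytic in {r₀ < r < r₁} and on the sphere {r = r₀}). If a pair (f, X) of a scalar function and a vector field satisfies DΦ[ḡ,π̄]*(f,X) = 0 on a neighborhood of ∂Σ in Σ, then f, X, ∂_ν f and D_ν X are analytic on ∂Σ, where ν is the inward unit normal of ∂Σ for ḡ and D its Levi-Civita connection. -/

import Mathlib

noncomputable section

open MeasureTheory Finset

/-! ## Basic geometry on the exterior region of `ℝ³` -/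

abbrev Vec : Type := Fin 3 → ℝ
abbrev Mtx : Type := Fin 3 → Fin 3 → ℝ

/-- Coordinate partial derivative. -/
def pd (i : Fin 3) (f : Vec → ℝ) (x : Vec) : ℝ := fderiv ℝ f x (Pi.single i 1)

/-- Euclidean radius `r`. -/
def rad (x : Vec) : ℝ := Real.sqrt (x 0 ^ 2 + x 1 ^ 2 + x 2 ^ 2)

/-- The manifold `Σ = {r ≥ r₀}`. -/
def Sig (r₀ : ℝ) : Set Vec := {x | r₀ ≤ rad x}

/-- Its boundary `∂Σ = {r = r₀}`. -/
def bdry (r₀ : ℝ) : Set Vec := {x | rad x = r₀}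

/-- The identity (Euclidean) matrix. -/
def idMtx : Mtx := fun i j => if i = j then 1 else 0

/-- Inverse matrix. -/
def minv (A : Mtx) : Mtx := fun i j => (Matrix.of A)⁻¹ i j

/-- Volume density `√(det g)`. -/
def dens (g : Vec → Mtx) (x : Vec) : ℝ := Real.sqrt (Matrix.det (Matrix.of (g x)))

/-- Asymptotically flat initial data set on `Σ = {r ≥ r₀}` (Definition 2.1). -/
structure AFData (r₀ : ℝ) : Type where
  g : Vec → Mtx
  pi : Vec → Mtx
  g_smooth : ContDiff ℝ (⊤ : ℕ∞) g
  pi_smooth : ContDiff ℝ (⊤ : ℕ∞) pi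
  g_symm : ∀ x i j, g x i j = g x j i
  pi_symm : ∀ x i j, pi x i j = pi x j i
  g_posdef : ∀ x ∈ Sig r₀, (Matrix.of (g x)).PosDef
  decay : ∀ k : ℕ, ∃ C : ℝ, ∀ x ∈ Sig r₀,
      rad x ^ (k + 1) * ‖iteratedFDeriv ℝ k (fun y => g y - idMtx) x‖
        + rad x ^ (k + 2) * ‖iteratedFDeriv ℝ k pi x‖ ≤ C

/-! ## Curvature and constraint operators, in coordinates -/

/-- Christoffel symbols `Γ^k_{ij}` of `g`. -/
def Gam (g : Vec → Mtx) (k i j : Fin 3) (x : Vec) : ℝ :=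
  (1 / 2) * ∑ l, minv (g x) k l *
    (pd i (fun y => g y l j) x + pd j (fun y => g y l i) x - pd l (fun y => g y i j) x)

/-- Ricci curvature `Ric(g)_{ij}`. -/
def RicT (g : Vec → Mtx) (i j : Fin 3) (x : Vec) : ℝ :=
  (∑ k, pd k (fun y => Gam g k i j y) x) - (∑ k, pd j (fun y => Gam g k k i y) x)
    + ∑ k, ∑ l, (Gam g k k l x * Gam g l i j x - Gam g k j l x * Gam g l k i x)

/-- Scalar curvature `R(g)`. -/
def scalR (g : Vec → Mtx) (x : Vec) : ℝ := ∑ i, ∑ j, minv (g x) i j * RicT g i j x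

/-- Trace `tr_g T` of a 2-tensor. -/
def trT (g T : Vec → Mtx) (x : Vec) : ℝ := ∑ i, ∑ j, minv (g x) i j * T x i j

/-- `|T|²_g`. -/
def normSqT (g T : Vec → Mtx) (x : Vec) : ℝ :=
  ∑ i, ∑ j, ∑ k, ∑ l, minv (g x) i k * minv (g x) j l * T x i j * T x k l

/-- Covariant derivative `D_k T_{ij}` of a 2-tensor. -/
def covD (g T : Vec → Mtx) (k i j : Fin 3) (x : Vec) : ℝ :=
  pd k (fun y => T y i j) x - ∑ l, (Gam g l k i x * T x l j + Gam g l k j x * T x i l)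

/-- Divergence `(div_g T)_i = g^{kl} D_k T_{li}`. -/
def divT (g T : Vec → Mtx) (i : Fin 3) (x : Vec) : ℝ :=
  ∑ k, ∑ l, minv (g x) k l * covD g T k l i x

/-- Hamiltonian constraint `H(g,π) = R(g) + ½ (tr_g π)² - |π|²_g`. -/
def Hc (g p : Vec → Mtx) (x : Vec) : ℝ := scalR g x + (1 / 2) * (trT g p x) ^ 2 - normSqT g p x

/-- The vacuum constraint equations on `Σ`. -/
def VacuumConstraints (g p : Vec → Mtx) (r₀ : ℝ) : Prop :=
  ∀ x ∈ Sig r₀, Hc g p x = 0 ∧ ∀ i, divT g p i x = 0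

/-- Lie derivative `(ℒ_X g)_{ij}`. -/
def lieG (g : Vec → Mtx) (X : Vec → Vec) (x : Vec) : Mtx := fun i j =>
  ∑ k, (X x k * pd k (fun y => g y i j) x
    + g x k j * pd i (fun y => X y k) x + g x i k * pd j (fun y => X y k) x)

/-- Divergence of a vector field, `div_g X = D_i X^i`. -/
def divX (g : Vec → Mtx) (X : Vec → Vec) (x : Vec) : ℝ :=
  (∑ i, pd i (fun y => X y i) x) + ∑ i, ∑ k, Gam g i i k x * X x k

/-- Modified Lie derivative `L_g X = ℒ_X g - (div_g X) g`. -/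
def Lmod (g : Vec → Mtx) (X : Vec → Vec) (x : Vec) : Mtx := fun i j =>
  lieG g X x i j - divX g X x * g x i j

/-- Laplace–Beltrami operator on scalars. -/
def lapl (g : Vec → Mtx) (u : Vec → ℝ) (x : Vec) : ℝ :=
  ∑ i, ∑ j, minv (g x) i j * (pd i (fun y => pd j u y) x - ∑ k, Gam g k i j x * pd k u x)

/-- Raising both indices of a 2-tensor: `T^{ij}`. -/
def raise2 (g T : Vec → Mtx) (x : Vec) (i j : Fin 3) : ℝ :=
  ∑ a, ∑ b, minv (g x) i a * minv (g x) j b * T x a b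

/-! ## The elliptic operator `P`, its formal adjoint and boundary operators -/

/-- Pairs `𝕌 = (u, X)` of a scalar function and a vector field. -/
abbrev PairF : Type := (Vec → ℝ) × (Vec → Vec)

/-- The operator `P` of (4.1). -/
def Pop (g p : Vec → Mtx) (U : PairF) : PairF :=
  (fun x => -8 * lapl g U.1 x - 2 * (∑ i, ∑ j, raise2 g p x i j * lieG g U.2 x i j)
      + trT g p x * divX g U.2 x,
   fun x i => -2 * divT g (Lmod g U.2) i x
      - 8 * (∑ j, ∑ l, minv (g x) j l * p x i l * pd j U.1 x)
      + 4 * trT g p x * pd i U.1 x)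

/-- The operator `P^*`. -/
def PopStar (g p : Vec → Mtx) (U : PairF) : PairF :=
  (fun x => -8 * lapl g U.1 x + 4 * (∑ i, ∑ j, raise2 g p x i j * lieG g U.2 x i j)
      - 4 * divX g (fun y k => trT g p y * U.2 y k) x,
   fun x i => -2 * divT g (Lmod g U.2) i x
      + 4 * (∑ j, ∑ l, minv (g x) j l * p x i l * pd j U.1 x)
      - pd i (fun y => trT g p y * U.1 y) x)

/-- The inward (with respect to `Σ`) unit normal `ν` of `∂Σ` for `g`. -/
def nuV (g : Vec → Mtx) (x : Vec) : Vec := fun i =>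
  (∑ j, minv (g x) i j * x j) /
    Real.sqrt (∑ i, ∑ j, minv (g x) i j * x i * x j)

/-- Normal derivative `∂_ν u`. -/
def dnu (g : Vec → Mtx) (u : Vec → ℝ) (x : Vec) : ℝ := ∑ i, nuV g x i * pd i u x

/-- `g(X, ν)`. -/
def gXnu (g : Vec → Mtx) (X : Vec → Vec) (x : Vec) : ℝ :=
  ∑ i, ∑ j, g x i j * X x i * nuV g x j

/-- `π(X, ν)`. -/
def piXnu (g p : Vec → Mtx) (X : Vec → Vec) (x : Vec) : ℝ :=
  ∑ i, ∑ j, p x i j * X x i * nuV g x j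

/-- Covariant derivative `D_ν X`. -/
def covDnuX (g : Vec → Mtx) (X : Vec → Vec) (x : Vec) : Vec := fun i =>
  ∑ k, nuV g x k * (pd k (fun y => X y i) x + ∑ l, Gam g i k l x * X x l)

/-- The boundary operator `B_ν`. -/
def Bnu (g p : Vec → Mtx) (U : PairF) : PairF :=
  (fun x => -8 * dnu g U.1 x + trT g p x * gXnu g U.2 x - 4 * piXnu g p U.2 x,
   fun x i => -2 * covDnuX g U.2 x i)

/-- The boundary operator `B_ν^*`. -/
def BnuStar (g p : Vec → Mtx) (U : PairF) : PairF :=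
  (fun x => -8 * dnu g U.1 x - 4 * trT g p x * gXnu g U.2 x + 8 * piXnu g p U.2 x,
   fun x i => -2 * covDnuX g U.2 x i)

/-! ## The class `ℰ(∂Σ)` of boundary perturbations -/

/-- An element `F = (b, ω, Z, ξ)` of `ℰ(∂Σ)`. -/
structure EBdry : Type where
  b : Vec → ℝ
  om : Vec → Vec
  Z : Vec → Vec
  xi : Vec → Mtx

/-- Smoothness of an element of `ℰ(∂Σ)`. -/
def EBdry.Smooth (F : EBdry) : Prop :=
  ContDiff ℝ (⊤ : ℕ∞) F.b ∧ ContDiff ℝ (⊤ : ℕ∞) F.om ∧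
    ContDiff ℝ (⊤ : ℕ∞) F.Z ∧ ContDiff ℝ (⊤ : ℕ∞) F.xi

/-- Action of `F ∈ ℰ(∂Σ)` on pairs. -/
def EBdry.app (F : EBdry) (U : PairF) : PairF :=
  (fun x => F.b x * U.1 x + ∑ i, F.om x i * U.2 x i,
   fun x i => U.1 x * F.Z x i + ∑ j, F.xi x i j * U.2 x j)

/-- The transpose `F^* = (b, Z^♭, ω^♯, ξ^♮)`. -/
def EBdry.star (g : Vec → Mtx) (F : EBdry) : EBdry where
  b := F.b
  om := fun x i => ∑ j, g x i j * F.Z x j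
  Z := fun x i => ∑ j, minv (g x) i j * F.om x j
  xi := fun x i j => ∑ l, ∑ k, minv (g x) j l * F.xi x l k * g x k i

/-- The identity element `Id ∈ ℰ(∂Σ)`. -/
def EBdry.id : EBdry where
  b := fun _ => 1
  om := fun _ _ => 0
  Z := fun _ _ => 0
  xi := fun _ => idMtx

/-- The boundary operator `B_ν + F`. -/
def PBC (g p : Vec → Mtx) (F : EBdry) (U : PairF) : PairF := Bnu g p U + F.app U

/-- The boundary operator `B_ν^* + F^*`. -/
def PBCStar (g p : Vec → Mtx) (F : EBdry) (U : PairF) : PairF :=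
  BnuStar g p U + (F.star g).app U

/-! ## Weighted Sobolev spaces -/

/-- Integrand of the weighted Sobolev seminorm of order `n` and weight `δ`. -/
def wIntegrand {E : Type} [NormedAddCommGroup E] [NormedSpace ℝ E]
    (g : Vec → Mtx) (n : ℕ) (δ : ℝ) (f : Vec → E) (x : Vec) : ℝ :=
  ((1 + rad x) ^ (-δ - 3 / 2 + (n : ℝ)) * ‖iteratedFDeriv ℝ n f x‖) ^ 2 * dens g x

/-- Membership in `H^k_δ(Σ)`. -/
def MemW {E : Type} [NormedAddCommGroup E] [NormedSpace ℝ E]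
    (g : Vec → Mtx) (r₀ : ℝ) (k : ℕ) (δ : ℝ) (f : Vec → E) : Prop :=
  ∀ n ≤ k, IntegrableOn (wIntegrand g n δ f) (Sig r₀) volume

/-- The `H^k_δ(Σ)` norm. -/
def wNorm {E : Type} [NormedAddCommGroup E] [NormedSpace ℝ E]
    (g : Vec → Mtx) (r₀ : ℝ) (k : ℕ) (δ : ℝ) (f : Vec → E) : ℝ :=
  ∑ n ∈ Finset.range (k + 1), Real.sqrt (∫ x in Sig r₀, wIntegrand g n δ f x)

/-- Membership of a pair in `H^k_δ(Σ)`. -/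
def MemWPair (g : Vec → Mtx) (r₀ : ℝ) (k : ℕ) (δ : ℝ) (U : PairF) : Prop :=
  MemW g r₀ k δ U.1 ∧ MemW g r₀ k δ U.2

/-- The `H^k_δ(Σ)` norm of a pair. -/
def wNormPair (g : Vec → Mtx) (r₀ : ℝ) (k : ℕ) (δ : ℝ) (U : PairF) : ℝ :=
  wNorm g r₀ k δ U.1 + wNorm g r₀ k δ U.2

/-- Pointwise inner product `𝕌·𝕍 = uv + g(X,Y)` of two pairs. -/
def dotPair (g : Vec → Mtx) (U V : PairF) (x : Vec) : ℝ :=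
  U.1 x * V.1 x + ∑ i, ∑ j, g x i j * U.2 x i * V.2 x j

/-- `L²(Σ)` inner product of pairs (with respect to the volume form of `g`). -/
def L2inner (g : Vec → Mtx) (r₀ : ℝ) (U V : PairF) : ℝ :=
  ∫ x in Sig r₀, dotPair g U V x * dens g x

/-! ## Boundary integrals and boundary Sobolev norms -/

/-- Spherical parametrization of the sphere of radius `r`. -/
def sphPt (r θ φ : ℝ) : Vec :=
  ![r * Real.sin θ * Real.cos φ, r * Real.sin θ * Real.sin φ, r * Real.cos θ]

def sphTh (r θ φ : ℝ) : Vec :=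
  ![r * Real.cos θ * Real.cos φ, r * Real.cos θ * Real.sin φ, -(r * Real.sin θ)]

def sphPh (r θ φ : ℝ) : Vec :=
  ![-(r * Real.sin θ * Real.sin φ), r * Real.sin θ * Real.cos φ, 0]

/-- Value of the metric on two vectors. -/
def gOf (g : Vec → Mtx) (x v w : Vec) : ℝ := ∑ i, ∑ j, g x i j * v i * w j

/-- Area density of the metric induced by `g` on `∂Σ`. -/
def bdryDens (g : Vec → Mtx) (r₀ θ φ : ℝ) : ℝ :=
  Real.sqrt (gOf g (sphPt r₀ θ φ) (sphTh r₀ θ φ) (sphTh r₀ θ φ)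
      * gOf g (sphPt r₀ θ φ) (sphPh r₀ θ φ) (sphPh r₀ θ φ)
    - gOf g (sphPt r₀ θ φ) (sphTh r₀ θ φ) (sphPh r₀ θ φ) ^ 2)

/-- Integral over `∂Σ` with respect to the area measure induced by `g`. -/
def bdryIntegral (g : Vec → Mtx) (r₀ : ℝ) (f : Vec → ℝ) : ℝ :=
  ∫ θ in (0 : ℝ)..Real.pi, ∫ φ in (0 : ℝ)..(2 * Real.pi),
    f (sphPt r₀ θ φ) * bdryDens g r₀ θ φ

/-- A fixed collar neighbourhood of `∂Σ` in `Σ`. -/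
def annulus (r₀ : ℝ) : Set Vec := {x | r₀ ≤ rad x ∧ rad x ≤ r₀ + 1}

/-- The `H¹` norm on the collar, used to define the trace norm. -/
def H1AnnNorm {E : Type} [NormedAddCommGroup E] [NormedSpace ℝ E]
    (r₀ : ℝ) (u : Vec → E) : ℝ :=
  Real.sqrt (∫ x in annulus r₀, (‖u x‖ ^ 2 + ‖fderiv ℝ u x‖ ^ 2))

/-- Membership in the trace space `H^{1/2}(∂Σ)`. -/
def MemHHalf {E : Type} [NormedAddCommGroup E] [NormedSpace ℝ E]
    (r₀ : ℝ) (h : Vec → E) : Prop :=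
  ∃ u : Vec → E, (∀ x ∈ bdry r₀, u x = h x) ∧
    IntegrableOn (fun x => ‖u x‖ ^ 2 + ‖fderiv ℝ u x‖ ^ 2) (annulus r₀) volume

/-- The `H^{1/2}(∂Σ)` (trace) norm. -/
def hHalfNorm {E : Type} [NormedAddCommGroup E] [NormedSpace ℝ E]
    (r₀ : ℝ) (h : Vec → E) : ℝ :=
  sInf {c : ℝ | 0 ≤ c ∧ ∃ u : Vec → E, (∀ x ∈ bdry r₀, u x = h x) ∧
    IntegrableOn (fun x => ‖u x‖ ^ 2 + ‖fderiv ℝ u x‖ ^ 2) (annulus r₀) volume ∧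
    H1AnnNorm r₀ u ≤ c}

/-- `H^{1/2}(∂Σ)` membership for pairs. -/
def MemHHalfPair (r₀ : ℝ) (U : PairF) : Prop := MemHHalf r₀ U.1 ∧ MemHHalf r₀ U.2

/-- `H^{1/2}(∂Σ)` norm of a pair. -/
def hHalfNormPair (r₀ : ℝ) (U : PairF) : ℝ := hHalfNorm r₀ U.1 + hHalfNorm r₀ U.2

/-! ## Kernels of the boundary value problems -/

/-- The kernel of `P_{F,δ} = (P, B_ν + F) : H²_δ(Σ) → L²_{δ-2}(Σ) × H^{1/2}(∂Σ)`. -/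
def kerSet (g p : Vec → Mtx) (r₀ : ℝ) (F : EBdry) (δ : ℝ) : Set PairF :=
  {U | MemWPair g r₀ 2 δ U
    ∧ (∀ x ∈ Sig r₀, (Pop g p U).1 x = 0 ∧ ∀ i, (Pop g p U).2 x i = 0)
    ∧ (∀ x ∈ bdry r₀, (PBC g p F U).1 x = 0 ∧ ∀ i, (PBC g p F U).2 x i = 0)}

/-- The kernel of `P^*_{F,δ} = (P^*, B_ν^* + F^*)`. -/
def kerSetStar (g p : Vec → Mtx) (r₀ : ℝ) (F : EBdry) (δ : ℝ) : Set PairF :=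
  {U | MemWPair g r₀ 2 δ U
    ∧ (∀ x ∈ Sig r₀, (PopStar g p U).1 x = 0 ∧ ∀ i, (PopStar g p U).2 x i = 0)
    ∧ (∀ x ∈ bdry r₀, (PBCStar g p F U).1 x = 0 ∧ ∀ i, (PBCStar g p F U).2 x i = 0)}

/-- Dimension (as a cardinal) of the kernel of `P_{F,δ}`. -/
def kerRank (g p : Vec → Mtx) (r₀ : ℝ) (F : EBdry) (δ : ℝ) : Cardinal :=
  Module.rank ℝ (Submodule.span ℝ (kerSet g p r₀ F δ))

/-- Dimension (as a cardinal) of the kernel of `P^*_{F,δ}`. -/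
def kerRankStar (g p : Vec → Mtx) (r₀ : ℝ) (F : EBdry) (δ : ℝ) : Cardinal :=
  Module.rank ℝ (Submodule.span ℝ (kerSetStar g p r₀ F δ))


/-! ## Statement 18: Lemma 5.4, regularity of KIDS at the boundary -/

/-- Second covariant derivative `D_a D_b T_{ij}` of a 2-tensor. -/
def covD2T (g T : Vec → Mtx) (a b i j : Fin 3) (x : Vec) : ℝ :=
  pd a (fun y => covD g T b i j y) x
    - ∑ c, (Gam g c a b x * covD g T c i j x
        + Gam g c a i x * covD g T b c j x
        + Gam g c a j x * covD g T b i c x)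

/-- The linearization `DH[g,π](h,ϖ)` (formula (2.7)). -/
def DHlin (g p h ϖ : Vec → Mtx) (x : Vec) : ℝ :=
  - lapl g (fun y => trT g h y) x
    + (∑ i, ∑ j, ∑ a, ∑ b, minv (g x) i a * minv (g x) j b * covD2T g h a b i j x)
    - (∑ i, ∑ j, raise2 g h x i j * RicT g i j x)
    + trT g p x * (trT g ϖ x - ∑ i, ∑ j, raise2 g p x i j * h x i j)
    - 2 * (∑ i, ∑ j, raise2 g p x i j * ϖ x i j)
    + 2 * (∑ i, ∑ j, raise2 g h x i j * ∑ k, ∑ l, minv (g x) k l * p x i k * p x j l)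

/-- The linearization `DM[g,π](h,ϖ)_i` (formula (2.8)). -/
def DMlin (g p h ϖ : Vec → Mtx) (i : Fin 3) (x : Vec) : ℝ :=
  divT g ϖ i x - (∑ k, ∑ l, raise2 g h x k l * covD g p k l i x)
    - (∑ j, (∑ a, minv (g x) j a * p x i a) *
        ∑ k, ∑ l, minv (g x) k l * (covD g h k l j x - (1 / 2) * covD g h j k l x))
    - (1 / 2) * (∑ k, ∑ l, raise2 g p x k l * covD g h i k l x)

/-- The linearized constraint operator `DΦ[g,π](h,ϖ) = (−DH[g,π](h,ϖ), 2DM[g,π](h,ϖ))`. -/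
def DPhi (g p h ϖ : Vec → Mtx) : PairF :=
  (fun x => -(DHlin g p h ϖ x), fun x i => 2 * DMlin g p h ϖ i x)

/-- `(f,X)` satisfies `DΦ[ḡ,π̄]^*(f,X) = 0` on a set `O`: distributionally, the pairing
`∫_Σ ⟨DΦ[ḡ,π̄](h,ϖ), (f,X)⟩ dμ_ḡ` vanishes for every pair of smooth symmetric 2-tensors
`(h,ϖ)` compactly supported in the interior of `Σ ∩ O`. -/
def KIDon (g p : Vec → Mtx) (r₀ : ℝ) (U : PairF) (O : Set Vec) : Prop :=
  ∀ h ϖ : Vec → Mtx,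
    ContDiff ℝ (⊤ : ℕ∞) h → ContDiff ℝ (⊤ : ℕ∞) ϖ →
    (∀ x i j, h x i j = h x j i) → (∀ x i j, ϖ x i j = ϖ x j i) →
    IsCompact (tsupport h) → IsCompact (tsupport ϖ) →
    tsupport h ⊆ O ∩ {x | r₀ < rad x} → tsupport ϖ ⊆ O ∩ {x | r₀ < rad x} →
    (∫ x in Sig r₀,
      ((DPhi g p h ϖ).1 x * U.1 x + ∑ i, (DPhi g p h ϖ).2 x i * U.2 x i)
        * dens g x) = 0

/-- A function on `∂Σ` is analytic if it extends to a function analytic in a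
neighbourhood of the sphere `∂Σ`. -/
def AnalyticOnBdry {E : Type} [NormedAddCommGroup E] [NormedSpace ℝ E]
    (r₀ : ℝ) (f : Vec → E) : Prop :=
  ∃ F : Vec → E, AnalyticOnNhd ℝ F (bdry r₀) ∧ ∀ x ∈ bdry r₀, F x = f x

/-! ## Analyticity of solutions of closed first-order systems -/

open Topology in
theorem analytic_deriv_bound {E F : Type*} [NormedAddCommGroup E] [NormedSpace ℝ E]
    [NormedAddCommGroup F] [NormedSpace ℝ F] [CompleteSpace F] (A : E → F) (x₀ : E)
    (hA : AnalyticAt ℝ A x₀) :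
    ∃ M C ρ : ℝ, 0 < M ∧ 0 < C ∧ 0 < ρ ∧ ∀ y ∈ Metric.ball x₀ ρ, AnalyticAt ℝ A y ∧
      ∀ k : ℕ, ‖iteratedFDeriv ℝ k A y‖ ≤ M * k.factorial * C ^ k := by
  obtain ⟨p, R, hp⟩ := hA
  obtain ⟨s, hs0, hsR⟩ := ENNReal.lt_iff_exists_nnreal_btwn.1 hp.r_pos
  have hs0' : (0 : NNReal) < s := by exact_mod_cast hs0
  set r : NNReal := s / 2 with hr
  have hr0 : 0 < r := by positivity
  have hrr : ((r : ENNReal) + r) < p.radius := by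
    rw [← ENNReal.coe_add, hr, add_halves]
    exact hsR.trans_le hp.r_le
  have hsum := p.changeOriginSeries_summable_aux₁ hrr
  set T := ∑' s : (Σ k l : ℕ, { s : Finset (Fin (k + l)) // s.card = l }),
      ‖p (s.1 + s.2.1)‖₊ * r ^ s.2.1 * r ^ s.1 with hT
  refine ⟨(T : ℝ) + 1, (r : ℝ)⁻¹, r, by positivity, by positivity, by exact_mod_cast hr0, ?_⟩
  intro y hy
  have hyn : ‖y - x₀‖₊ < r := by
    rw [Metric.mem_ball, dist_eq_norm] at hy
    exact_mod_cast hy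
  have hrs : r ≤ s := by
    rw [hr]; exact NNReal.half_le_self s
  have hyR : (‖y - x₀‖₊ : ENNReal) < R :=
    lt_of_lt_of_le (by exact_mod_cast hyn.trans_le hrs) hsR.le
  have hco := hp.changeOrigin hyR
  rw [add_sub_cancel] at hco
  refine ⟨hco.analyticAt, fun k => ?_⟩
  have hb : ‖p.changeOrigin (y - x₀) k‖₊ * r ^ k ≤ T := by
    have hsig := NNReal.summable_sigma.1 hsum
    calc ‖p.changeOrigin (y - x₀) k‖₊ * r ^ k
        ≤ (∑' s : Σ l : ℕ, { s : Finset (Fin (k + l)) // s.card = l },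
            ‖p (k + s.1)‖₊ * ‖y - x₀‖₊ ^ s.1) * r ^ k := by
          gcongr
          exact p.nnnorm_changeOrigin_le k (hyR.trans_le hp.r_le)
      _ ≤ (∑' s : Σ l : ℕ, { s : Finset (Fin (k + l)) // s.card = l },
            ‖p (k + s.1)‖₊ * r ^ s.1) * r ^ k := by
          gcongr ?_ * _
          have hs2 : Summable (fun s : Σ l : ℕ, { s : Finset (Fin (k + l)) // s.card = l } =>
            ‖p (k + s.1)‖₊ * r ^ s.1) := by
            refine p.changeOriginSeries_summable_aux₂ ?_ k
            exact lt_of_le_of_lt (by simp) hrr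
          have hle : ∀ s : Σ l : ℕ, { s : Finset (Fin (k + l)) // s.card = l },
              ‖p (k + s.1)‖₊ * ‖y - x₀‖₊ ^ s.1 ≤ ‖p (k + s.1)‖₊ * r ^ s.1 := fun s => by gcongr
          exact Summable.tsum_le_tsum hle (NNReal.summable_of_le hle hs2) hs2
      _ = ∑' s : Σ l : ℕ, { s : Finset (Fin (k + l)) // s.card = l },
            ‖p (k + s.1)‖₊ * r ^ s.1 * r ^ k := by
          rw [NNReal.tsum_mul_right]
      _ ≤ T := by
          exact NNReal.tsum_comp_le_tsum_of_inj hsum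
            (i := fun s : Σ l : ℕ, { s : Finset (Fin (k + l)) // s.card = l } =>
              (⟨k, s⟩ : Σ k l : ℕ, { s : Finset (Fin (k + l)) // s.card = l }))
            (fun a b h => by simpa using h)
  have hb' : ‖p.changeOrigin (y - x₀) k‖ ≤ T * ((r : ℝ)⁻¹) ^ k := by
    have : ‖p.changeOrigin (y - x₀) k‖ * (r : ℝ) ^ k ≤ T := by exact_mod_cast hb
    rw [inv_pow, ← div_eq_mul_inv, le_div_iff₀ (by positivity)]
    exact this
  refine ContinuousMultilinearMap.opNorm_le_bound (by positivity) (fun v => ?_)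
  rw [hco.iteratedFDeriv_eq_sum_of_completeSpace v]
  calc ‖∑ σ : Equiv.Perm (Fin k), p.changeOrigin (y - x₀) k (fun i => v (σ i))‖
      ≤ ∑ σ : Equiv.Perm (Fin k), (T * ((r : ℝ)⁻¹) ^ k) * ∏ i, ‖v i‖ := by
        refine norm_sum_le_of_le _ (fun σ _ => ?_)
        refine (ContinuousMultilinearMap.le_opNorm _ _).trans ?_
        rw [Equiv.prod_comp σ (fun i => ‖v i‖)]
        gcongr
    _ = T * k.factorial * ((r : ℝ)⁻¹) ^ k * ∏ i, ‖v i‖ := by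
        rw [Finset.sum_const, Finset.card_univ, Fintype.card_perm, Fintype.card_fin,
          nsmul_eq_mul]
        ring
    _ ≤ _ := by
        gcongr
        linarith

theorem system_deriv_bound {E F : Type*} [NormedAddCommGroup E] [NormedSpace ℝ E]
    [NormedAddCommGroup F] [NormedSpace ℝ F] (w : E → F)
    (A : E → (F →L[ℝ] (E →L[ℝ] F))) (Ω : Set E) (hΩ : IsOpen Ω)
    (hw : ContDiff ℝ (⊤ : ℕ∞) w) (hA : ContDiffOn ℝ (⊤ : ℕ∞) A Ω)
    (heq : ∀ x ∈ Ω, fderiv ℝ w x = A x (w x)) (M C K R : ℝ) (hM : 0 < M) (hC : 0 < C)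
    (hK : 0 < K)
    (hbA : ∀ y ∈ Ω, ∀ k : ℕ, ‖iteratedFDeriv ℝ k A y‖ ≤ M * k.factorial * C ^ k)
    (hbw : ∀ y ∈ Ω, ‖w y‖ ≤ K) (hR1 : 2 * C ≤ R) (hR2 : 2 * M ≤ R) :
    ∀ y ∈ Ω, ∀ n : ℕ, ‖iteratedFDeriv ℝ n w y‖ ≤ K * n.factorial * R ^ n := by
  intro y hy n
  have hR : 0 < R := by linarith
  induction n using Nat.strong_induction_on with
  | _ n ih =>
  cases n with
  | zero => simpa using hbw y hy
  | succ n =>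
    rw [← norm_iteratedFDeriv_fderiv]
    have h1 : iteratedFDeriv ℝ n (fderiv ℝ w) y
        = iteratedFDerivWithin ℝ n (fun x =>
            ContinuousLinearMap.id ℝ (F →L[ℝ] (E →L[ℝ] F)) (A x) (w x)) Ω y := by
      rw [← iteratedFDerivWithin_of_isOpen n hΩ hy]
      exact iteratedFDerivWithin_congr (fun x hx => by simpa using heq x hx) hy n
    rw [h1]
    have hn : ((n : ℕ∞) : WithTop ℕ∞) ≤ ((⊤ : ℕ∞) : WithTop ℕ∞) := by exact_mod_cast le_top
    have hbil := ContinuousLinearMap.norm_iteratedFDerivWithin_le_of_bilinear (𝕜 := ℝ)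
      (ContinuousLinearMap.id ℝ (F →L[ℝ] (E →L[ℝ] F))) (f := A) (g := w)
      (N := ((⊤ : ℕ∞) : WithTop ℕ∞)) (s := Ω) (x := y) (n := n) hA hw.contDiffOn
      hΩ.uniqueDiffOn hy hn
    refine hbil.trans ?_
    refine (mul_le_of_le_one_left (by positivity) ContinuousLinearMap.norm_id_le).trans ?_
    have hterm : ∀ i ∈ Finset.range (n + 1), (n.choose i : ℝ) *
        ‖iteratedFDerivWithin ℝ i A Ω y‖ * ‖iteratedFDerivWithin ℝ (n - i) w Ω y‖ ≤
        M * K * n.factorial * R ^ n * (1 / 2) ^ i := by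
      intro i hi
      have hin : i ≤ n := by
        have := Finset.mem_range.1 hi
        omega
      rw [iteratedFDerivWithin_of_isOpen i hΩ hy, iteratedFDerivWithin_of_isOpen (n - i) hΩ hy]
      have e1 := hbA y hy i
      have e2 := ih (n - i) (by omega)
      have hch : (n.choose i : ℝ) * i.factorial * (n - i).factorial = n.factorial := by
        exact_mod_cast Nat.choose_mul_factorial_mul_factorial hin
      have hCR : C ^ i ≤ R ^ i * (1 / 2) ^ i := by
        rw [← mul_pow]
        exact pow_le_pow_left₀ hC.le (by linarith) i
      calc (n.choose i : ℝ) * ‖iteratedFDeriv ℝ i A y‖ * ‖iteratedFDeriv ℝ (n - i) w y‖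
          ≤ (n.choose i : ℝ) * (M * i.factorial * C ^ i) * (K * (n - i).factorial * R ^ (n - i)) := by
            gcongr
        _ = M * K * ((n.choose i : ℝ) * i.factorial * (n - i).factorial) * R ^ (n - i) * C ^ i := by
            ring
        _ ≤ M * K * ((n.choose i : ℝ) * i.factorial * (n - i).factorial) * R ^ (n - i)
              * (R ^ i * (1 / 2) ^ i) := by gcongr
        _ = M * K * n.factorial * (R ^ (n - i) * R ^ i) * (1 / 2) ^ i := by rw [hch]; ring
        _ = _ := by rw [← pow_add, Nat.sub_add_cancel hin]
    refine (Finset.sum_le_sum hterm).trans ?_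
    rw [← Finset.mul_sum]
    have hgeo : ∑ i ∈ Finset.range (n + 1), ((1 : ℝ) / 2) ^ i ≤ 2 := sum_geometric_two_le _
    calc M * K * n.factorial * R ^ n * ∑ i ∈ Finset.range (n + 1), ((1 : ℝ) / 2) ^ i
        ≤ M * K * n.factorial * R ^ n * 2 := by gcongr
      _ = (2 * M) * (K * n.factorial * R ^ n) := by ring
      _ ≤ R * (K * n.factorial * R ^ n) := by gcongr
      _ ≤ (n + 1 : ℝ) * (R * (K * n.factorial * R ^ n)) := by
          refine le_mul_of_one_le_left (by positivity) ?_
          have : (0 : ℝ) ≤ n := by positivity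
          linarith
      _ = K * (n + 1).factorial * R ^ (n + 1) := by
          rw [Nat.factorial_succ]; push_cast; ring

open Topology in
theorem system_analytic {E F : Type*} [NormedAddCommGroup E] [NormedSpace ℝ E]
    [CompleteSpace E] [NormedAddCommGroup F] [NormedSpace ℝ F] [CompleteSpace F] (w : E → F)
    (A : E → (F →L[ℝ] (E →L[ℝ] F))) (Ω : Set E) (hΩ : IsOpen Ω) (x₀ : E)
    (hw : ContDiff ℝ (⊤ : ℕ∞) w) (hA : AnalyticAt ℝ A x₀)
    (heq : ∀ x ∈ Ω, fderiv ℝ w x = A x (w x)) :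
    ∃ ρ : ℝ, 0 < ρ ∧ ∀ y₀ ∈ Metric.ball x₀ ρ ∩ Ω, ∃ G : E → F, AnalyticAt ℝ G x₀ ∧
      ∀ x ∈ Metric.ball x₀ ρ, (∀ t ∈ Set.Ioo (0 : ℝ) 1, y₀ + t • (x - y₀) ∈ Ω) → G x = w x := by
  obtain ⟨M, C, ρ₁, hM, hC, hρ₁, hbA⟩ := analytic_deriv_bound A x₀ hA
  obtain ⟨ρ₂, hρ₂, hbw⟩ : ∃ ρ₂ > 0, ∀ y ∈ Metric.ball x₀ ρ₂, ‖w y‖ < ‖w x₀‖ + 1 := by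
    have : ∀ᶠ y in 𝓝 x₀, ‖w y‖ < ‖w x₀‖ + 1 :=
      (hw.continuous.norm.continuousAt).eventually_lt_const (by linarith)
    exact Metric.eventually_nhds_iff_ball.1 this
  set K := ‖w x₀‖ + 1 with hK
  set R := 2 * C + 2 * M with hR
  have hR0 : 0 < R := by positivity
  set ρ := min (min ρ₁ ρ₂) (1 / (4 * R)) with hρ
  have hρ0 : 0 < ρ := by positivity
  have hρR : R * (2 * ρ) ≤ 1 / 2 := by
    have : ρ ≤ 1 / (4 * R) := min_le_right _ _
    calc R * (2 * ρ) ≤ R * (2 * (1 / (4 * R))) := by gcongr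
      _ = 1 / 2 := by field_simp; norm_num
  have hbound := system_deriv_bound w A (Ω ∩ Metric.ball x₀ ρ) (hΩ.inter Metric.isOpen_ball) hw
    (fun y hy => ((hbA y (Metric.ball_subset_ball ((min_le_left _ _).trans (min_le_left _ _))
      hy.2)).1.contDiffAt).contDiffWithinAt)
    (fun x hx => heq x hx.1) M C K R hM hC (by positivity)
    (fun y hy => (hbA y (Metric.ball_subset_ball ((min_le_left _ _).trans (min_le_left _ _))
      hy.2)).2)
    (fun y hy => (hbw y (Metric.ball_subset_ball ((min_le_left _ _).trans (min_le_right _ _))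
      hy.2)).le) (by linarith) (by linarith)
  refine ⟨ρ, hρ0, fun y₀ hy₀ => ?_⟩
  set p : FormalMultilinearSeries ℝ E F := fun n => ((n.factorial : ℝ)⁻¹) • iteratedFDeriv ℝ n w y₀
    with hp
  have hK0 : 0 < K := by positivity
  have hpn : ∀ n, ‖p n‖ ≤ K * R ^ n := by
    intro n
    have h1 := hbound y₀ ⟨hy₀.2, hy₀.1⟩ n
    rw [hp, norm_smul, norm_inv, RCLike.norm_natCast]
    have : (0 : ℝ) < n.factorial := by positivity
    rw [inv_mul_le_iff₀ this]
    linarith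
  have hrad : ENNReal.ofReal (R⁻¹) ≤ p.radius := by
    refine p.le_radius_of_bound K (r := Real.toNNReal R⁻¹) (fun n => ?_)
    rw [Real.coe_toNNReal _ (by positivity)]
    calc ‖p n‖ * R⁻¹ ^ n ≤ K * R ^ n * R⁻¹ ^ n := by gcongr; exact hpn n
      _ = K := by rw [mul_assoc, ← mul_pow, mul_inv_cancel₀ hR0.ne', one_pow, mul_one]
  have hrad0 : 0 < p.radius := lt_of_lt_of_le (by simpa using hR0) hrad
  have hps := p.hasFPowerSeriesOnBall hrad0
  have h2ρ : 2 * ρ < R⁻¹ := by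
    rw [lt_inv_comm₀ (by positivity) hR0]
    rw [← one_div, lt_div_iff₀ (by positivity)]
    linarith
  refine ⟨fun x => p.sum (x - y₀), ?_, ?_⟩
  · have hm : x₀ - y₀ ∈ Metric.eball (0 : E) p.radius := by
      refine Metric.eball_subset_eball hrad ?_
      rw [Metric.eball_ofReal, mem_ball_zero_iff]
      have := hy₀.1
      rw [Metric.mem_ball, dist_comm, dist_eq_norm] at this
      linarith
    have h3 := hps.analyticAt_of_mem hm
    exact AnalyticAt.comp (g := p.sum) (f := fun x => x - y₀) h3 (by fun_prop)
  · intro x hx hseg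
    set v := x - y₀ with hv
    have hvn : ‖v‖ < 2 * ρ := by
      have h1 := hy₀.1
      rw [Metric.mem_ball] at h1 hx
      have := dist_triangle_right x y₀ x₀
      rw [hv, ← dist_eq_norm]
      linarith
    have hRv : R * ‖v‖ ≤ 1 / 2 := le_trans (by gcongr) hρR
    have hm : v ∈ Metric.eball (0 : E) p.radius := by
      refine Metric.eball_subset_eball hrad ?_
      rw [Metric.eball_ofReal, mem_ball_zero_iff]
      linarith
    have hsum := (hps.hasSum hm).tendsto_sum_nat
    rw [zero_add] at hsum
    have hsum1 := hsum.comp (Filter.tendsto_add_atTop_nat 1)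
    -- Taylor
    have hrem : Filter.Tendsto (fun n : ℕ => ‖w x - ∑ k ∈ Finset.range (n + 1), p k (fun _ => v)‖)
        Filter.atTop (𝓝 0) := by
      have hup : ∀ n : ℕ, ‖w x - ∑ k ∈ Finset.range (n + 1), p k (fun _ => v)‖ ≤
          K * ((n + 1 : ℕ) * ((1 : ℝ) / 2) ^ (n + 1)) := by
        intro n
        have ht := map_add_eq_sum_add_integral_iteratedFDeriv (f := w) (x := y₀) (y := v) (n := n)
          (fun t _ => (hw.of_le (by exact_mod_cast le_top)).contDiffAt)
        have hxy : y₀ + v = x := by rw [hv]; abel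
        rw [hxy] at ht
        have hd : w x - ∑ k ∈ Finset.range (n + 1), p k (fun _ => v) =
            (n.factorial : ℝ)⁻¹ • ∫ t in (0 : ℝ)..1, (1 - t)^n •
              iteratedFDeriv ℝ (n + 1) w (y₀ + t • v) (fun _ ↦ v) := by
          rw [ht]
          simp only [hp, smul_apply]
          abel
        rw [hd, norm_smul, norm_inv, RCLike.norm_natCast]
        have hi : ‖∫ t in (0 : ℝ)..1, (1 - t)^n •
              iteratedFDeriv ℝ (n + 1) w (y₀ + t • v) (fun _ ↦ v)‖ ≤
              (K * (n + 1).factorial * R ^ (n + 1) * ‖v‖ ^ (n + 1)) * |(1 : ℝ) - 0| := by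
          refine intervalIntegral.norm_integral_le_of_norm_le_const_ae ?_
          have hne : ∀ᵐ t : ℝ, t ≠ 1 := by
            simp [ae_iff, measure_singleton]
          filter_upwards [hne] with t ht1 htm
          rw [Set.uIoc_of_le zero_le_one] at htm
          have htI : t ∈ Set.Ioo (0 : ℝ) 1 := ⟨htm.1, lt_of_le_of_ne htm.2 ht1⟩
          have hb := hbound (y₀ + t • v) ⟨hseg t htI, by
            have := (convex_ball x₀ ρ).add_smul_sub_mem hy₀.1 hx ⟨htI.1.le, htI.2.le⟩
            exact this⟩ (n + 1)
          rw [norm_smul, norm_pow, Real.norm_eq_abs, abs_of_nonneg (by linarith [htI.2])]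
          calc (1 - t) ^ n * ‖iteratedFDeriv ℝ (n + 1) w (y₀ + t • v) (fun _ ↦ v)‖
              ≤ 1 * (‖iteratedFDeriv ℝ (n + 1) w (y₀ + t • v)‖ * ∏ _i : Fin (n + 1), ‖v‖) := by
                gcongr
                · exact pow_le_one₀ (by linarith [htI.2]) (by linarith [htI.1])
                · exact ContinuousMultilinearMap.le_opNorm _ _
            _ ≤ _ := by
                rw [one_mul, Finset.prod_const, Finset.card_univ, Fintype.card_fin]
                gcongr
        have hf0 : (0 : ℝ) < n.factorial := by positivity
        rw [inv_mul_le_iff₀ hf0]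
        refine hi.trans ?_
        rw [sub_zero, abs_one, mul_one, mul_assoc, ← mul_pow, Nat.factorial_succ]
        push_cast
        calc K * (((n : ℝ) + 1) * n.factorial) * (R * ‖v‖) ^ (n + 1)
            ≤ K * (((n : ℝ) + 1) * n.factorial) * (1 / 2) ^ (n + 1) := by gcongr
          _ = _ := by ring
      have hlim : Filter.Tendsto (fun n : ℕ => K * ((n + 1 : ℕ) * ((1 : ℝ) / 2) ^ (n + 1)))
          Filter.atTop (𝓝 0) := by
        have := (tendsto_self_mul_const_pow_of_lt_one (r := (1 : ℝ) / 2) (by norm_num)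
          (by norm_num)).comp (Filter.tendsto_add_atTop_nat 1)
        simpa using this.const_mul K
      exact squeeze_zero (fun n => norm_nonneg _) hup hlim
    have h5 : Filter.Tendsto (fun n : ℕ => ‖w x - ∑ k ∈ Finset.range (n + 1), p k (fun _ => v)‖)
        Filter.atTop (𝓝 ‖w x - p.sum v‖) := (hsum1.const_sub (w x)).norm
    have h6 := tendsto_nhds_unique h5 hrem
    exact (sub_eq_zero.1 (norm_eq_zero.1 h6)).symm

/-! ## Integration by parts and the fundamental lemma -/

/-- Smoothness at every point of a set. -/
def SmOn (Ω : Set Vec) (u : Vec → ℝ) : Prop := ∀ x ∈ Ω, ContDiffAt ℝ (⊤ : ℕ∞) u x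

/-- Test functions on `Ω`. -/
def TestFn (Ω : Set Vec) (φ : Vec → ℝ) : Prop :=
  ContDiff ℝ (⊤ : ℕ∞) φ ∧ HasCompactSupport φ ∧ tsupport φ ⊆ Ω

theorem contDiffAt_pd {u : Vec → ℝ} {x : Vec} (h : ContDiffAt ℝ (⊤ : ℕ∞) u x) (k : Fin 3) :
    ContDiffAt ℝ (⊤ : ℕ∞) (fun y => pd k u y) x := by
  unfold pd
  exact (h.fderiv_right (m := ((⊤ : ℕ∞) : WithTop ℕ∞)) (by exact_mod_cast le_rfl)).clm_apply
    contDiffAt_const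

theorem contDiff_pd {u : Vec → ℝ} (h : ContDiff ℝ (⊤ : ℕ∞) u) (k : Fin 3) :
    ContDiff ℝ (⊤ : ℕ∞) (fun y => pd k u y) :=
  contDiff_iff_contDiffAt.2 (fun _ => contDiffAt_pd h.contDiffAt k)

theorem ContDiffAt.diffTop {u : Vec → ℝ} {x : Vec} (h : ContDiffAt ℝ (⊤ : ℕ∞) u x) :
    DifferentiableAt ℝ u x := h.differentiableAt (by simp)

theorem pd_eventually {u v : Vec → ℝ} {x : Vec} (h : u =ᶠ[nhds x] v) (k : Fin 3) :
    pd k u x = pd k v x := by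
  unfold pd; rw [h.fderiv_eq]

theorem pd_zero_of_notMem {ψ : Vec → ℝ} {x : Vec} (hx : x ∉ tsupport ψ) (k : Fin 3) :
    pd k ψ x = 0 := by
  have h := notMem_tsupport_iff_eventuallyEq.1 hx
  rw [pd_eventually h k]
  simp [pd]

theorem tsupport_pd (ψ : Vec → ℝ) (k : Fin 3) : tsupport (fun y => pd k ψ y) ⊆ tsupport ψ := by
  refine closure_minimal (fun x hx => ?_) (isClosed_tsupport ψ)
  by_contra hc
  exact hx (pd_zero_of_notMem hc k)

theorem TestFn.pd {Ω : Set Vec} {ψ : Vec → ℝ} (h : TestFn Ω ψ) (k : Fin 3) :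
    TestFn Ω (fun y => pd k ψ y) :=
  ⟨contDiff_pd h.1 k, h.2.1.of_isClosed_subset (isClosed_tsupport _) (tsupport_pd ψ k),
    (tsupport_pd ψ k).trans h.2.2⟩

theorem pd_mul {u v : Vec → ℝ} {x : Vec} (hu : DifferentiableAt ℝ u x)
    (hv : DifferentiableAt ℝ v x) (k : Fin 3) :
    pd k (fun y => u y * v y) x = pd k u x * v x + u x * pd k v x := by
  unfold pd
  rw [fderiv_fun_mul hu hv]
  simp
  ring

theorem pd_add {u v : Vec → ℝ} {x : Vec} (hu : DifferentiableAt ℝ u x)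
    (hv : DifferentiableAt ℝ v x) (k : Fin 3) :
    pd k (fun y => u y + v y) x = pd k u x + pd k v x := by
  unfold pd
  rw [fderiv_fun_add hu hv]
  simp

theorem pd_sum {ι : Type*} {s : Finset ι} {u : ι → Vec → ℝ} {x : Vec}
    (hu : ∀ i ∈ s, DifferentiableAt ℝ (u i) x) (k : Fin 3) :
    pd k (fun y => ∑ i ∈ s, u i y) x = ∑ i ∈ s, pd k (u i) x := by
  unfold pd
  rw [fderiv_fun_sum hu]
  simp

theorem testFn_mul {Ω : Set Vec} {u ψ : Vec → ℝ} (hu : SmOn Ω u) (hψ : TestFn Ω ψ) :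
    TestFn Ω (fun x => u x * ψ x) := by
  have hts : tsupport (fun x => u x * ψ x) ⊆ tsupport ψ := tsupport_mul_subset_right
  refine ⟨?_, hψ.2.1.of_isClosed_subset (isClosed_tsupport _) hts, hts.trans hψ.2.2⟩
  rw [contDiff_iff_contDiffAt]
  intro x
  by_cases hx : x ∈ tsupport ψ
  · exact (hu x (hψ.2.2 hx)).mul hψ.1.contDiffAt
  · have h := notMem_tsupport_iff_eventuallyEq.1 hx
    have h2 : (fun x => u x * ψ x) =ᶠ[nhds x] (fun _ => (0 : ℝ)) := by
      filter_upwards [h] with y hy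
      simp [hy]
    exact contDiffAt_const.congr_of_eventuallyEq h2

theorem TestFn.integrable {Ω : Set Vec} {ψ : Vec → ℝ} (h : TestFn Ω ψ) : Integrable ψ :=
  h.1.continuous.integrable_of_hasCompactSupport h.2.1

theorem SmOn.pd {Ω : Set Vec} {u : Vec → ℝ} (h : SmOn Ω u) (k : Fin 3) :
    SmOn Ω (fun y => pd k u y) := fun x hx => contDiffAt_pd (h x hx) k

theorem ibp {Ω : Set Vec} {u ψ : Vec → ℝ} (hu : SmOn Ω u) (hψ : TestFn Ω ψ) (k : Fin 3) :
    ∫ x, u x * pd k ψ x = - ∫ x, pd k u x * ψ x := by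
  have h1 := testFn_mul hu hψ
  have i1 : Integrable (fun x => u x * _root_.pd k ψ x) := (testFn_mul hu (hψ.pd k)).integrable
  have i2 : Integrable (fun x => _root_.pd k u x * ψ x) := (testFn_mul (hu.pd k) hψ).integrable
  have hz : ∫ x, _root_.pd k (fun y => u y * ψ y) x = 0 := by
    have := integral_mul_fderiv_eq_neg_fderiv_mul_of_integrable (μ := (volume : Measure Vec))
      (f := fun _ : Vec => (1 : ℝ)) (g := fun y => u y * ψ y) (v := Pi.single k 1)
      (by simp) (by simpa [_root_.pd] using (h1.pd k).integrable) (by simpa using h1.integrable)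
      (fun x _ => differentiableAt_const _) (fun x _ => h1.1.contDiffAt.diffTop)
    simpa [_root_.pd] using this
  have he : ∀ x, _root_.pd k (fun y => u y * ψ y) x
      = _root_.pd k u x * ψ x + u x * _root_.pd k ψ x := by
    intro x
    by_cases hx : x ∈ tsupport ψ
    · exact pd_mul (hu x (hψ.2.2 hx)).diffTop hψ.1.contDiffAt.diffTop k
    · rw [pd_zero_of_notMem hx, image_eq_zero_of_notMem_tsupport hx,
        pd_zero_of_notMem (fun h => hx (tsupport_mul_subset_right h))]
      simp
  simp_rw [he] at hz
  rw [integral_add i2 i1] at hz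
  linarith

theorem weak_form {Ω : Set Vec} (hΩ : IsOpen Ω) (Q : Fin 3 → Fin 3 → Vec → ℝ)
    (B : Fin 3 → Vec → ℝ) (C : Vec → ℝ) (hQ : ∀ c d, SmOn Ω (Q c d)) (hB : ∀ k, SmOn Ω (B k))
    (hC : SmOn Ω C)
    (h : ∀ φ, TestFn Ω φ → ∫ x, ((∑ c, ∑ d, Q c d x * pd c (fun y => pd d φ y) x)
      + (∑ k, B k x * pd k φ x) + C x * φ x) = 0) :
    ∀ x ∈ Ω, (∑ c, ∑ d, pd d (fun y => pd c (Q c d) y) x) - (∑ k, pd k (B k) x) + C x = 0 := by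
  set u : Vec → ℝ := fun x => (∑ c, ∑ d, pd d (fun y => pd c (Q c d) y) x)
    - (∑ k, pd k (B k) x) + C x with hu
  have hus : SmOn Ω u := by
    intro x hx
    refine ContDiffAt.add (ContDiffAt.sub ?_ ?_) (hC x hx)
    · refine ContDiffAt.sum fun c _ => ContDiffAt.sum fun d _ => ?_
      exact ((hQ c d).pd c).pd d x hx
    · exact ContDiffAt.sum fun k _ => (hB k).pd k x hx
  have hcont : ContinuousOn u Ω := fun x hx => (hus x hx).continuousAt.continuousWithinAt
  have hae : ∀ᵐ x : Vec, x ∈ Ω → u x = 0 := by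
    refine hΩ.ae_eq_zero_of_integral_contDiff_smul_eq_zero
      (hcont.locallyIntegrableOn hΩ.measurableSet) ?_
    intro φ hφ1 hφ2 hφ3
    have hφ : TestFn Ω φ := ⟨hφ1, hφ2, hφ3⟩
    have h0 := h φ hφ
    have iQ : ∀ c d, Integrable (fun x => Q c d x * pd c (fun y => pd d φ y) x) :=
      fun c d => (testFn_mul (hQ c d) ((hφ.pd d).pd c)).integrable
    have iQ' : ∀ c d, Integrable (fun x => pd d (fun y => pd c (Q c d) y) x * φ x) :=
      fun c d => (testFn_mul (((hQ c d).pd c).pd d) hφ).integrable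
    have iB : ∀ k, Integrable (fun x => B k x * pd k φ x) :=
      fun k => (testFn_mul (hB k) (hφ.pd k)).integrable
    have iB' : ∀ k, Integrable (fun x => pd k (B k) x * φ x) :=
      fun k => (testFn_mul ((hB k).pd k) hφ).integrable
    have iC : Integrable (fun x => C x * φ x) := (testFn_mul hC hφ).integrable
    rw [integral_add (by
        refine Integrable.add ?_ ?_
        · exact integrable_finsetSum _ fun c _ => integrable_finsetSum _ fun d _ => iQ c d
        · exact integrable_finsetSum _ fun k _ => iB k) iC,
      integral_add (integrable_finsetSum _ fun c _ => integrable_finsetSum _ fun d _ => iQ c d)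
        (integrable_finsetSum _ fun k _ => iB k),
      integral_finsetSum _ (fun c _ => integrable_finsetSum _ fun d _ => iQ c d),
      integral_finsetSum _ (fun k _ => iB k)] at h0
    simp_rw [integral_finsetSum _ (fun d _ => iQ _ d)] at h0
    have e1 : ∀ c d, ∫ x, Q c d x * pd c (fun y => pd d φ y) x
        = ∫ x, pd d (fun y => pd c (Q c d) y) x * φ x := by
      intro c d
      rw [ibp (hQ c d) (hφ.pd d) c, ibp ((hQ c d).pd c) hφ d, neg_neg]
    have e2 : ∀ k, ∫ x, B k x * pd k φ x = - ∫ x, pd k (B k) x * φ x := fun k => ibp (hB k) hφ k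
    simp_rw [e1, e2] at h0
    have : ∀ x, φ x • u x = (∑ c, ∑ d, pd d (fun y => pd c (Q c d) y) x * φ x)
        - (∑ k, pd k (B k) x * φ x) + C x * φ x := by
      intro x
      simp only [hu, smul_eq_mul, ← Finset.sum_mul]
      ring
    simp_rw [this]
    rw [integral_add (by
        refine Integrable.sub ?_ ?_
        · exact integrable_finsetSum _ fun c _ => integrable_finsetSum _ fun d _ => iQ' c d
        · exact integrable_finsetSum _ fun k _ => iB' k) iC,
      integral_sub (integrable_finsetSum _ fun c _ => integrable_finsetSum _ fun d _ => iQ' c d)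
        (integrable_finsetSum _ fun k _ => iB' k),
      integral_finsetSum _ (fun c _ => integrable_finsetSum _ fun d _ => iQ' c d),
      integral_finsetSum _ (fun k _ => iB' k)]
    simp_rw [integral_finsetSum _ (fun d _ => iQ' _ d)]
    rw [Finset.sum_neg_distrib] at h0
    linarith
  have := Measure.eqOn_open_of_ae_eq (μ := (volume : Measure Vec)) (f := u) (g := fun _ => 0)
    (((ae_restrict_iff' hΩ.measurableSet).2 hae)) hΩ hcont continuousOn_const
  exact this

/-! ## A calculus of linear differential operators acting on a test function -/

/-- Analyticity on `V`, for scalar functions. -/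
def An (V : Set Vec) (a : Vec → ℝ) : Prop := AnalyticOnNhd ℝ a V

theorem An.const {V : Set Vec} (c : ℝ) : An V (fun _ => c) := analyticOnNhd_const

theorem An.add {V : Set Vec} {a b : Vec → ℝ} (ha : An V a) (hb : An V b) :
    An V (fun x => a x + b x) := fun x hx => (ha x hx).add (hb x hx)

theorem An.sub {V : Set Vec} {a b : Vec → ℝ} (ha : An V a) (hb : An V b) :
    An V (fun x => a x - b x) := fun x hx => (ha x hx).sub (hb x hx)

theorem An.neg {V : Set Vec} {a : Vec → ℝ} (ha : An V a) :
    An V (fun x => - a x) := fun x hx => (ha x hx).neg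

theorem An.mul {V : Set Vec} {a b : Vec → ℝ} (ha : An V a) (hb : An V b) :
    An V (fun x => a x * b x) := fun x hx => (ha x hx).mul (hb x hx)

theorem An.sum {V : Set Vec} {ι : Type*} {s : Finset ι} {a : ι → Vec → ℝ}
    (ha : ∀ i, An V (a i)) : An V (fun x => ∑ i ∈ s, a i x) :=
  fun x hx => Finset.analyticAt_fun_sum _ (fun i _ => ha i x hx)

theorem An.pd {V : Set Vec} {a : Vec → ℝ} (ha : An V a) (k : Fin 3) :
    An V (fun x => pd k a x) := by
  intro x hx
  unfold _root_.pd
  exact ((ContinuousLinearMap.apply ℝ ℝ (Pi.single k (1 : ℝ) : Vec)).analyticAt _).comp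
    (ha x hx).fderiv

theorem An.sm {V : Set Vec} {a : Vec → ℝ} (ha : An V a) : SmOn V a :=
  fun x hx => (ha x hx).contDiffAt

theorem An.ite {V : Set Vec} {a : Vec → ℝ} (ha : An V a) (P : Prop) [Decidable P] :
    An V (fun x => if P then a x else 0) := by
  by_cases h : P
  · simpa [h] using ha
  · simpa [h] using An.const (V := V) 0

/-- Operators acting on scalar test functions. -/
abbrev Opr : Type := (Vec → ℝ) → Vec → ℝ

/-- `L φ = q^{cd} ∂_c ∂_d φ + b^k ∂_k φ + c φ` on `V`, and `L` is local. -/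
def OpSym (V : Set Vec) (q : Fin 3 → Fin 3 → Vec → ℝ) (b : Fin 3 → Vec → ℝ) (c : Vec → ℝ)
    (L : Opr) : Prop :=
  (∀ i j, An V (q i j)) ∧ (∀ k, An V (b k)) ∧ An V c ∧
  (∀ φ x, x ∉ tsupport φ → L φ x = 0) ∧
  ∀ φ, ContDiff ℝ (⊤ : ℕ∞) φ → ∀ x ∈ V, L φ x =
    (∑ i, ∑ j, q i j x * pd i (fun y => pd j φ y) x) + (∑ k, b k x * pd k φ x) + c x * φ x

theorem OpSym.add {V : Set Vec} {q q' b b' c c' L L'} (h : OpSym V q b c L) (h' : OpSym V q' b' c' L') :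
    OpSym V (fun i j x => q i j x + q' i j x) (fun k x => b k x + b' k x) (fun x => c x + c' x)
      (fun φ x => L φ x + L' φ x) := by
  refine ⟨fun i j => (h.1 i j).add (h'.1 i j), fun k => (h.2.1 k).add (h'.2.1 k),
    h.2.2.1.add h'.2.2.1, fun φ x hx => ?_, fun φ hφ x hx => ?_⟩
  · simp [h.2.2.2.1 φ x hx, h'.2.2.2.1 φ x hx]
  · simp only [h.2.2.2.2 φ hφ x hx, h'.2.2.2.2 φ hφ x hx, add_mul, Finset.sum_add_distrib]
    ring

theorem OpSym.mul {V : Set Vec} {q b c L a} (ha : An V a) (h : OpSym V q b c L) :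
    OpSym V (fun i j x => a x * q i j x) (fun k x => a x * b k x) (fun x => a x * c x)
      (fun φ x => a x * L φ x) := by
  refine ⟨fun i j => ha.mul (h.1 i j), fun k => ha.mul (h.2.1 k),
    ha.mul h.2.2.1, fun φ x hx => ?_, fun φ hφ x hx => ?_⟩
  · simp [h.2.2.2.1 φ x hx]
  · simp only [h.2.2.2.2 φ hφ x hx, mul_add, Finset.mul_sum, mul_assoc]

theorem OpSym.zero {V : Set Vec} :
    OpSym V (fun _ _ _ => 0) (fun _ _ => 0) (fun _ => 0) (fun _ _ => 0) := by
  refine ⟨fun i j => .const 0, fun k => .const 0, .const 0, fun φ x hx => rfl,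
    fun φ hφ x hx => ?_⟩
  simp

theorem OpSym.congr {V : Set Vec} {q b c q' b' c' L} (h : OpSym V q b c L)
    (hq : ∀ i j x, q i j x = q' i j x) (hb : ∀ k x, b k x = b' k x) (hc : ∀ x, c x = c' x) :
    OpSym V q' b' c' L := by
  obtain rfl : q = q' := by funext i j x; exact hq i j x
  obtain rfl : b = b' := by funext i x; exact hb i x
  obtain rfl : c = c' := by funext x; exact hc x
  exact h

theorem OpSym.sum {V : Set Vec} {ι : Type} [DecidableEq ι] (s : Finset ι)
    {q : ι → Fin 3 → Fin 3 → Vec → ℝ}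
    {b : ι → Fin 3 → Vec → ℝ} {c : ι → Vec → ℝ} {L : ι → Opr}
    (h : ∀ m, OpSym V (q m) (b m) (c m) (L m)) :
    OpSym V (fun i j x => ∑ m ∈ s, q m i j x) (fun k x => ∑ m ∈ s, b m k x)
      (fun x => ∑ m ∈ s, c m x) (fun φ x => ∑ m ∈ s, L m φ x) := by
  induction s using Finset.induction_on with
  | empty => simpa using OpSym.zero
  | insert a s ha ih =>
    simp only [Finset.sum_insert ha]
    exact (h a).add ih

theorem OpSym.pd {V : Set Vec} (hV : IsOpen V) {b c L} (h : OpSym V (fun _ _ _ => 0) b c L)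
    (a : Fin 3) :
    OpSym V (fun i j x => if i = a then b j x else 0)
      (fun k x => pd a (b k) x + if k = a then c x else 0)
      (fun x => pd a c x) (fun φ x => pd a (fun y => L φ y) x) := by
  refine ⟨fun i j => (h.2.1 j).ite _, fun k => ((h.2.1 k).pd a).add (h.2.2.1.ite _),
    h.2.2.1.pd a, fun φ x hx => ?_, fun φ hφ x hx => ?_⟩
  · have : (fun y => L φ y) =ᶠ[nhds x] fun _ => 0 := by
      filter_upwards [(isClosed_tsupport φ).isOpen_compl.mem_nhds hx] with y hy
      exact h.2.2.2.1 φ y hy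
    beta_reduce
    rw [pd_eventually this]
    simp [_root_.pd]
  · have : (fun y => L φ y) =ᶠ[nhds x] fun y => (∑ k, b k y * _root_.pd k φ y) + c y * φ y := by
      filter_upwards [hV.mem_nhds hx] with y hy
      rw [h.2.2.2.2 φ hφ y hy]
      simp
    have hbd : ∀ k, DifferentiableAt ℝ (b k) x := fun k => ((h.2.1 k).sm x hx).diffTop
    have hcd : DifferentiableAt ℝ c x := (h.2.2.1.sm x hx).diffTop
    have hφd : DifferentiableAt ℝ φ x := hφ.contDiffAt.diffTop
    have hpd : ∀ k, DifferentiableAt ℝ (fun y => _root_.pd k φ y) x :=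
      fun k => (contDiff_pd hφ k).contDiffAt.diffTop
    beta_reduce
    rw [pd_eventually this, pd_add
      (DifferentiableAt.fun_sum fun k _ => (hbd k).fun_mul (hpd k)) (hcd.fun_mul hφd),
      pd_sum (fun k _ => (hbd k).fun_mul (hpd k)), pd_mul hcd hφd]
    simp_rw [pd_mul (hbd _) (hpd _)]
    simp only [Finset.sum_add_distrib, add_mul, ite_mul, zero_mul, Finset.sum_ite_eq',
      Finset.sum_ite_irrel, Finset.sum_const_zero, Finset.mem_univ, if_true]
    ring

/-- Order-zero operators. -/
def S0 (V : Set Vec) (c : Vec → ℝ) (L : Opr) : Prop :=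
  OpSym V (fun _ _ _ => 0) (fun _ _ => 0) c L

/-- Operators of order at most one with principal part `b`. -/
def S1 (V : Set Vec) (b : Fin 3 → Vec → ℝ) (L : Opr) : Prop :=
  ∃ c, OpSym V (fun _ _ _ => 0) b c L

/-- Operators of order at most two with principal part `q`. -/
def S2 (V : Set Vec) (q : Fin 3 → Fin 3 → Vec → ℝ) (L : Opr) : Prop :=
  ∃ b c, OpSym V q b c L

/-- Operators of order at most one. -/
def E1 (V : Set Vec) (L : Opr) : Prop := ∃ b, S1 V b L

theorem S0.toS1 {V c L} (h : S0 V c L) : S1 V (fun _ _ => 0) L := ⟨c, h⟩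
theorem S1.toE1 {V b L} (h : S1 V b L) : E1 V L := ⟨b, h⟩
theorem S0.toE1 {V c L} (h : S0 V c L) : E1 V L := h.toS1.toE1
theorem S0.toS2 {V c L} (h : S0 V c L) : S2 V (fun _ _ _ => 0) L := ⟨_, c, h⟩
theorem E1.toS2 {V L} (h : E1 V L) : S2 V (fun _ _ _ => 0) L := h

theorem S0.add {V c c' L L'} (h : S0 V c L) (h' : S0 V c' L') :
    S0 V (fun x => c x + c' x) (fun φ x => L φ x + L' φ x) :=
  (OpSym.add h h').congr (by simp) (by simp) (by simp)

theorem S0.mul {V c L a} (ha : An V a) (h : S0 V c L) :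
    S0 V (fun x => a x * c x) (fun φ x => a x * L φ x) :=
  (OpSym.mul ha h).congr (by simp) (by simp) (by simp)

theorem S0.sum {V : Set Vec} {ι : Type} [Fintype ι] [DecidableEq ι] {c : ι → Vec → ℝ} {L : ι → Opr}
    (h : ∀ m, S0 V (c m) (L m)) : S0 V (fun x => ∑ m, c m x) (fun φ x => ∑ m, L m φ x) :=
  (OpSym.sum univ h).congr (by simp) (by simp) (by simp)

theorem S0.pd {V : Set Vec} (hV : IsOpen V) {c L} (h : S0 V c L) (a : Fin 3) :
    S1 V (fun k x => if k = a then c x else 0) (fun φ x => pd a (fun y => L φ y) x) :=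
  ⟨_, (OpSym.pd hV h a).congr (by simp) (by simp [_root_.pd]) (fun _ => rfl)⟩

theorem S1.pd {V : Set Vec} (hV : IsOpen V) {b L} (h : S1 V b L) (a : Fin 3) :
    S2 V (fun i j x => if i = a then b j x else 0) (fun φ x => pd a (fun y => L φ y) x) := by
  obtain ⟨c, hc⟩ := h
  exact ⟨_, _, OpSym.pd hV hc a⟩

theorem S1.add {V b b' L L'} (h : S1 V b L) (h' : S1 V b' L') :
    S1 V (fun k x => b k x + b' k x) (fun φ x => L φ x + L' φ x) := by
  obtain ⟨c, h⟩ := h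
  obtain ⟨c', h'⟩ := h'
  exact ⟨_, (OpSym.add h h').congr (by simp) (fun _ _ => rfl) (fun _ => rfl)⟩

theorem S1.mul {V b L a} (ha : An V a) (h : S1 V b L) :
    S1 V (fun k x => a x * b k x) (fun φ x => a x * L φ x) := by
  obtain ⟨c, h⟩ := h
  exact ⟨_, (OpSym.mul ha h).congr (by simp) (fun _ _ => rfl) (fun _ => rfl)⟩

theorem S1.sum {V : Set Vec} {ι : Type} [Fintype ι] [DecidableEq ι] {b : ι → Fin 3 → Vec → ℝ}
    {L : ι → Opr} (h : ∀ m, S1 V (b m) (L m)) :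
    S1 V (fun k x => ∑ m, b m k x) (fun φ x => ∑ m, L m φ x) := by
  choose c h using h
  exact ⟨_, (OpSym.sum univ h).congr (by simp) (fun _ _ => rfl) (fun _ => rfl)⟩

theorem S2.add {V q q' L L'} (h : S2 V q L) (h' : S2 V q' L') :
    S2 V (fun i j x => q i j x + q' i j x) (fun φ x => L φ x + L' φ x) := by
  obtain ⟨b, c, h⟩ := h
  obtain ⟨b', c', h'⟩ := h'
  exact ⟨_, _, OpSym.add h h'⟩

theorem S2.mul {V q L a} (ha : An V a) (h : S2 V q L) :
    S2 V (fun i j x => a x * q i j x) (fun φ x => a x * L φ x) := by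
  obtain ⟨b, c, h⟩ := h
  exact ⟨_, _, OpSym.mul ha h⟩

theorem S2.sum {V : Set Vec} {ι : Type} [Fintype ι] [DecidableEq ι]
    {q : ι → Fin 3 → Fin 3 → Vec → ℝ} {L : ι → Opr} (h : ∀ m, S2 V (q m) (L m)) :
    S2 V (fun i j x => ∑ m, q m i j x) (fun φ x => ∑ m, L m φ x) := by
  choose b c h using h
  exact ⟨_, _, OpSym.sum univ h⟩

theorem E1.add {V L L'} (h : E1 V L) (h' : E1 V L') : E1 V (fun φ x => L φ x + L' φ x) := by
  obtain ⟨b, h⟩ := h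
  obtain ⟨b', h'⟩ := h'
  exact ⟨_, h.add h'⟩

theorem E1.mul {V L a} (ha : An V a) (h : E1 V L) : E1 V (fun φ x => a x * L φ x) := by
  obtain ⟨b, h⟩ := h
  exact ⟨_, h.mul ha⟩

theorem E1.sum {V : Set Vec} {ι : Type} [Fintype ι] [DecidableEq ι] {L : ι → Opr}
    (h : ∀ m, E1 V (L m)) : E1 V (fun φ x => ∑ m, L m φ x) := by
  choose b h using h
  exact ⟨_, S1.sum h⟩

theorem S2.eqOp {V q q' L L'} (h : S2 V q L) (hq : ∀ i j x, q i j x = q' i j x)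
    (hL : ∀ φ x, L φ x = L' φ x) : S2 V q' L' := by
  obtain rfl : q = q' := by funext i j x; exact hq i j x
  obtain rfl : L = L' := by funext φ x; exact hL φ x
  exact h

theorem S1.eqOp {V b b' L L'} (h : S1 V b L) (hb : ∀ i x, b i x = b' i x)
    (hL : ∀ φ x, L φ x = L' φ x) : S1 V b' L' := by
  obtain rfl : b = b' := by funext i x; exact hb i x
  obtain rfl : L = L' := by funext φ x; exact hL φ x
  exact h

theorem S0.eqOp {V c c' L L'} (h : S0 V c L) (hb : ∀ x, c x = c' x)
    (hL : ∀ φ x, L φ x = L' φ x) : S0 V c' L' := by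
  obtain rfl : c = c' := by funext x; exact hb x
  obtain rfl : L = L' := by funext φ x; exact hL φ x
  exact h

theorem E1.eqOp {V L L'} (h : E1 V L) (hL : ∀ φ x, L φ x = L' φ x) : E1 V L' := by
  obtain rfl : L = L' := by funext φ x; exact hL φ x
  exact h

section GeoOps
/-! ## Analyticity of the geometric quantities -/

theorem An.congr {V : Set Vec} (hV : IsOpen V) {a b : Vec → ℝ} (ha : An V a)
    (h : ∀ x ∈ V, a x = b x) : An V b :=
  AnalyticOnNhd.congr hV ha h

theorem An.inv {V : Set Vec} {a : Vec → ℝ} (ha : An V a) (h : ∀ x ∈ V, a x ≠ 0) :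
    An V (fun x => (a x)⁻¹) := fun x hx => (ha x hx).inv (h x hx)

theorem An.sqrt {V : Set Vec} {a : Vec → ℝ} (ha : An V a) (h : ∀ x ∈ V, 0 < a x) :
    An V (fun x => Real.sqrt (a x)) := by
  intro x hx
  have h1 : AnalyticAt ℝ Real.sqrt (a x) :=
    (Real.contDiffAt_sqrt (h x hx).ne').analyticAt
  exact h1.comp (ha x hx)

/-- Analytic geometry data on an open set `V`. -/
structure Geo (V : Set Vec) (g p : Vec → Mtx) : Prop where
  op : IsOpen V
  ga : ∀ i j, An V (fun x => g x i j)
  pa : ∀ i j, An V (fun x => p x i j)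
  gs : ∀ x i j, g x i j = g x j i
  dp : ∀ x ∈ V, 0 < Matrix.det (Matrix.of (g x))

variable {V : Set Vec} {g p : Vec → Mtx}

theorem Geo.det (G : Geo V g p) : An V (fun x => Matrix.det (Matrix.of (g x))) := by
  simp only [Matrix.det_fin_three, Matrix.of_apply]
  have h := G.ga
  exact ((((((((h 0 0).mul (h 1 1)).mul (h 2 2)).sub (((h 0 0).mul (h 1 2)).mul (h 2 1))).sub
    (((h 0 1).mul (h 1 0)).mul (h 2 2))).add (((h 0 1).mul (h 1 2)).mul (h 2 0))).add
    (((h 0 2).mul (h 1 0)).mul (h 2 1))).sub (((h 0 2).mul (h 1 1)).mul (h 2 0)))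

theorem Geo.adj (G : Geo V g p) (i j : Fin 3) :
    An V (fun x => Matrix.adjugate (Matrix.of (g x)) i j) := by
  simp only [Matrix.adjugate_fin_three, Matrix.of_apply]
  have h := G.ga
  have h2 : ∀ a b c d e f k l, An V (fun x => g x a b * g x c d - g x e f * g x k l) :=
    fun a b c d e f k l => ((h a b).mul (h c d)).sub ((h e f).mul (h k l))
  have h3 : ∀ a b c d e f k l, An V (fun x => -(g x a b * g x c d) + g x e f * g x k l) :=
    fun a b c d e f k l => ((h a b).mul (h c d)).neg.add ((h e f).mul (h k l))
  fin_cases i <;> fin_cases j <;> first | exact h2 _ _ _ _ _ _ _ _ | exact h3 _ _ _ _ _ _ _ _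

theorem Geo.mi (G : Geo V g p) (i j : Fin 3) : An V (fun x => minv (g x) i j) := by
  unfold minv
  simp only [Matrix.inv_def, Matrix.smul_apply, Ring.inverse_eq_inv', smul_eq_mul]
  exact (G.det.inv fun x hx => (G.dp x hx).ne').mul (G.adj i j)

theorem Geo.mig (G : Geo V g p) {x : Vec} (hx : x ∈ V) (i k : Fin 3) :
    ∑ j, minv (g x) i j * g x j k = if i = k then 1 else 0 := by
  have h := Matrix.nonsing_inv_mul (Matrix.of (g x)) (isUnit_iff_ne_zero.2 (G.dp x hx).ne')
  have h2 := congrFun (congrFun h i) k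
  rw [Matrix.mul_apply, Matrix.one_apply] at h2
  exact h2

theorem Geo.mis (G : Geo V g p) (x : Vec) (i k : Fin 3) :
    minv (g x) i k = minv (g x) k i := by
  unfold minv
  have h : (Matrix.of (g x)).transpose = Matrix.of (g x) := by
    ext a b
    exact G.gs x b a
  have h2 := Matrix.transpose_nonsing_inv (Matrix.of (g x))
  rw [h] at h2
  exact congrFun (congrFun h2 k) i

theorem Geo.dens (G : Geo V g p) : An V (fun x => dens g x) :=
  G.det.sqrt G.dp

theorem Geo.dens_pos (G : Geo V g p) {x : Vec} (hx : x ∈ V) : 0 < _root_.dens g x :=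
  Real.sqrt_pos.2 (G.dp x hx)

theorem Geo.gam (G : Geo V g p) (k i j : Fin 3) : An V (fun x => Gam g k i j x) := by
  unfold Gam
  exact (An.const _).mul (An.sum fun l => (G.mi k l).mul
    ((((G.ga l j).pd i).add ((G.ga l i).pd j)).sub ((G.ga i j).pd l)))

theorem Geo.ric (G : Geo V g p) (i j : Fin 3) : An V (fun x => RicT g i j x) := by
  unfold RicT
  exact ((An.sum fun k => (G.gam k i j).pd k).sub (An.sum fun k => (G.gam k k i).pd j)).add
    (An.sum fun k => An.sum fun l => ((G.gam k k l).mul (G.gam l i j)).sub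
      ((G.gam k j l).mul (G.gam l k i)))

theorem Geo.trp (G : Geo V g p) : An V (fun x => trT g p x) := by
  unfold trT
  exact An.sum fun i => An.sum fun j => (G.mi i j).mul (G.pa i j)

theorem Geo.rp (G : Geo V g p) (i j : Fin 3) : An V (fun x => raise2 g p x i j) := by
  unfold raise2
  exact An.sum fun a => An.sum fun b => ((G.mi i a).mul (G.mi j b)).mul (G.pa a b)

theorem Geo.cp (G : Geo V g p) (k i j : Fin 3) : An V (fun x => covD g p k i j x) := by
  unfold covD
  exact ((G.pa i j).pd k).sub (An.sum fun l => ((G.gam l k i).mul (G.pa l j)).add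
    ((G.gam l k j).mul (G.pa i l)))

/-! ## The linearized constraint operators on `φ E` -/

theorem S0.neg {V c L} (h : S0 V c L) : S0 V (fun x => - c x) (fun φ x => - L φ x) :=
  (S0.mul (An.const (-1)) h).eqOp (by simp) (by simp)

theorem E1.neg {V L} (h : E1 V L) : E1 V (fun φ x => - L φ x) :=
  (E1.mul (An.const (-1)) h).eqOp (by simp)

theorem E1.sub {V L L'} (h : E1 V L) (h' : E1 V L') : E1 V (fun φ x => L φ x - L' φ x) :=
  (h.add h'.neg).eqOp (by simp [sub_eq_add_neg])

theorem S2.neg {V q L} (h : S2 V q L) : S2 V (fun i j x => - q i j x) (fun φ x => - L φ x) :=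
  (S2.mul (An.const (-1)) h).eqOp (by simp) (by simp)

theorem S2.addE {V q L L'} (h : S2 V q L) (h' : E1 V L') :
    S2 V q (fun φ x => L φ x + L' φ x) :=
  (h.add h'.toS2).eqOp (by simp) (by simp)

theorem S2.subE {V q L L'} (h : S2 V q L) (h' : E1 V L') :
    S2 V q (fun φ x => L φ x - L' φ x) :=
  (h.addE h'.neg).eqOp (by simp) (by simp [sub_eq_add_neg])

theorem S1.sub0 {V b c L L'} (h : S1 V b L) (h' : S0 V c L') :
    S1 V b (fun φ x => L φ x - L' φ x) :=
  (h.add h'.neg.toS1).eqOp (by simp) (by simp [sub_eq_add_neg])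

/-- The tensor `φ E`. -/
def hE (E : Vec → Mtx) (φ : Vec → ℝ) : Vec → Mtx := fun x i j => φ x * E x i j

variable {E : Vec → Mtx}

theorem s0_comp (hE0 : ∀ i j, An V (fun x => E x i j)) (i j : Fin 3) :
    S0 V (fun x => E x i j) (fun φ x => hE E φ x i j) := by
  refine ⟨fun _ _ => .const 0, fun _ => .const 0, hE0 i j, fun φ x hx => ?_, fun φ _ x _ => ?_⟩
  · simp [hE, image_eq_zero_of_notMem_tsupport hx]
  · simp [hE, mul_comm]

theorem Geo.s0_tr (G : Geo V g p) (hE0 : ∀ i j, An V (fun x => E x i j)) :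
    S0 V (fun x => trT g E x) (fun φ x => trT g (hE E φ) x) := by
  unfold trT
  exact S0.sum fun i => S0.sum fun j => S0.mul (G.mi i j) (s0_comp hE0 i j)

theorem Geo.s0_raise (G : Geo V g p) (hE0 : ∀ i j, An V (fun x => E x i j)) (i j : Fin 3) :
    S0 V (fun x => raise2 g E x i j) (fun φ x => raise2 g (hE E φ) x i j) := by
  unfold raise2
  exact S0.sum fun a => S0.sum fun b => S0.mul ((G.mi i a).mul (G.mi j b)) (s0_comp hE0 a b)

theorem Geo.s1_cov (G : Geo V g p) (hE0 : ∀ i j, An V (fun x => E x i j)) (k i j : Fin 3) :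
    S1 V (fun m x => if m = k then E x i j else 0) (fun φ x => covD g (hE E φ) k i j x) := by
  unfold covD
  exact ((s0_comp hE0 i j).pd G.op k).sub0
    (S0.sum fun l => (S0.mul (G.gam l k i) (s0_comp hE0 l j)).add
      (S0.mul (G.gam l k j) (s0_comp hE0 i l)))

theorem Geo.s2_cov2 (G : Geo V g p) (hE0 : ∀ i j, An V (fun x => E x i j)) (a b i j : Fin 3) :
    S2 V (fun c d x => if c = a then if d = b then E x i j else 0 else 0)
      (fun φ x => covD2T g (hE E φ) a b i j x) := by
  unfold covD2T
  exact ((G.s1_cov hE0 b i j).pd G.op a).subE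
    (E1.sum fun c => ((E1.mul (G.gam c a b) (G.s1_cov hE0 c i j).toE1).add
      (E1.mul (G.gam c a i) (G.s1_cov hE0 b c j).toE1)).add
      (E1.mul (G.gam c a j) (G.s1_cov hE0 b i c).toE1))

theorem Geo.s2_lapl (G : Geo V g p) (hE0 : ∀ i j, An V (fun x => E x i j)) :
    S2 V (fun c d x => ∑ i, ∑ j, minv (g x) i j *
        if c = i then if d = j then trT g E x else 0 else 0)
      (fun φ x => lapl g (fun y => trT g (hE E φ) y) x) := by
  unfold lapl
  exact S2.sum fun i => S2.sum fun j => S2.mul (G.mi i j)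
    ((((G.s0_tr hE0).pd G.op j).pd G.op i).subE
      (E1.sum fun k => E1.mul (G.gam k i j) ((G.s0_tr hE0).pd G.op k).toE1))

theorem Geo.s2_DH (G : Geo V g p) (hE0 : ∀ i j, An V (fun x => E x i j)) :
    S2 V (fun c d x => (-∑ i, ∑ j, minv (g x) i j *
          if c = i then if d = j then trT g E x else 0 else 0)
        + ∑ i, ∑ j, ∑ a, ∑ b, minv (g x) i a * minv (g x) j b *
          if c = a then if d = b then E x i j else 0 else 0)
      (fun φ x => DHlin g p (hE E φ) (fun _ _ _ => 0) x) := by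
  have h1 := (((((G.s2_lapl hE0).neg).add
    (S2.sum fun i => S2.sum fun j => S2.sum fun a => S2.sum fun b =>
      S2.mul ((G.mi i a).mul (G.mi j b)) (G.s2_cov2 hE0 a b i j))).subE
    (E1.sum fun i => E1.sum fun j => E1.mul (G.ric i j) (G.s0_raise hE0 i j).toE1)).subE
    (E1.mul G.trp (E1.sum fun i => E1.sum fun j =>
      E1.mul (G.rp i j) (s0_comp hE0 i j).toE1))).addE
    (E1.mul (An.const 2) (E1.sum fun i => E1.sum fun j => E1.mul
      (An.sum (s := univ) fun k => An.sum (s := univ) fun l =>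
        ((G.mi k l).mul (G.pa i k)).mul (G.pa j l)) (G.s0_raise hE0 i j).toE1))
  refine h1.eqOp (fun _ _ _ => rfl) (fun φ x => ?_)
  unfold DHlin
  have e1 : trT g (fun _ _ _ => (0 : ℝ)) x = 0 := by simp [trT]
  simp only [e1, mul_zero, Finset.sum_const_zero, zero_sub, sub_zero, mul_neg,
    mul_comm (raise2 g (hE E φ) x _ _)]
  ring

theorem Geo.e1_DM (G : Geo V g p) (hE0 : ∀ i j, An V (fun x => E x i j)) (i : Fin 3) :
    E1 V (fun φ x => DMlin g p (hE E φ) (fun _ _ _ => 0) i x) := by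
  have h1 := (((E1.sum fun k => E1.sum fun l =>
      E1.mul (G.cp k l i) (G.s0_raise hE0 k l).toE1).neg.sub
    (E1.sum fun j => E1.mul (An.sum (s := univ) fun a => (G.mi j a).mul (G.pa i a))
      (E1.sum fun k => E1.sum fun l => E1.mul (G.mi k l)
        ((G.s1_cov hE0 k l j).toE1.sub (E1.mul (An.const (1/2)) (G.s1_cov hE0 j k l).toE1))))).sub
    (E1.mul (An.const (1/2)) (E1.sum fun k => E1.sum fun l =>
      E1.mul (G.rp k l) (G.s1_cov hE0 i k l).toE1)))
  refine h1.eqOp (fun φ x => ?_)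
  unfold DMlin
  have e1 : divT g (fun _ _ _ => (0 : ℝ)) i x = 0 := by simp [divT, covD, pd]
  simp only [e1, zero_sub, mul_comm (raise2 g (hE E φ) x _ _)]

theorem Geo.s0_DHw (G : Geo V g p) (hE0 : ∀ i j, An V (fun x => E x i j)) :
    ∃ c, S0 V c (fun φ x => DHlin g p (fun _ _ _ => 0) (hE E φ) x) := by
  have h1 := (S0.mul G.trp (G.s0_tr hE0)).add (S0.mul (An.const (-2))
    (S0.sum fun i => S0.sum fun j => S0.mul (G.rp i j) (s0_comp hE0 i j)))
  refine ⟨_, h1.eqOp (fun _ => rfl) (fun φ x => ?_)⟩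
  unfold DHlin
  have e1 : (fun y => trT g (fun _ _ _ => (0 : ℝ)) y) = fun _ => 0 := by funext y; simp [trT]
  have e0 : ∀ a b c, covD g (fun _ _ _ => (0 : ℝ)) a b c = fun _ => 0 := by
    intro a b c; funext y; simp [covD, pd]
  have e2 : ∀ a b i j, covD2T g (fun _ _ _ => (0 : ℝ)) a b i j x = 0 := by
    intro a b i j; simp [covD2T, e0, pd]
  have e3 : ∀ i j, raise2 g (fun _ _ _ => (0 : ℝ)) x i j = 0 := by
    intro i j; simp [raise2]
  simp only [e1, e2, e3]
  simp [lapl, pd]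
  ring

theorem Geo.s1_DMw (G : Geo V g p) (hE0 : ∀ i j, An V (fun x => E x i j)) (i : Fin 3) :
    S1 V (fun m x => ∑ l, minv (g x) m l * E x l i)
      (fun φ x => DMlin g p (fun _ _ _ => 0) (hE E φ) i x) := by
  have h1 := S1.sum fun k => S1.sum fun l => S1.mul (G.mi k l) (G.s1_cov hE0 k l i)
  refine h1.eqOp (fun m x => ?_) (fun φ x => ?_)
  · rw [Finset.sum_comm]
    simp
  unfold DMlin
  have e0 : ∀ a b c, covD g (fun _ _ _ => (0 : ℝ)) a b c = fun _ => 0 := by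
    intro a b c; funext y; simp [covD, pd]
  have e3 : ∀ i j, raise2 g (fun _ _ _ => (0 : ℝ)) x i j = 0 := by
    intro i j; simp [raise2]
  simp only [e0, e3]
  simp [divT]
end GeoOps

section Jets

/-! ## Jets: functions that are analytic linear combinations of unknowns -/

/-- `u` is on `Ω` a linear combination of the `w i` with coefficients analytic on `V`. -/
def Jet (V Ω : Set Vec) {ι : Type} [Fintype ι] (w : ι → Vec → ℝ) (u : Vec → ℝ) : Prop :=
  ∃ a : ι → Vec → ℝ, (∀ i, An V (a i)) ∧ ∀ x ∈ Ω, u x = ∑ i, a i x * w i x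

variable {V Ω : Set Vec} {ι : Type} [Fintype ι] {w : ι → Vec → ℝ} {u v : Vec → ℝ}

theorem Jet.congr (h : Jet V Ω w u) (e : ∀ x ∈ Ω, u x = v x) : Jet V Ω w v := by
  obtain ⟨a, ha, h⟩ := h
  exact ⟨a, ha, fun x hx => by rw [← e x hx, h x hx]⟩

theorem Jet.add (h : Jet V Ω w u) (h' : Jet V Ω w v) : Jet V Ω w (fun x => u x + v x) := by
  obtain ⟨a, ha, h⟩ := h
  obtain ⟨b, hb, h'⟩ := h'
  refine ⟨fun i x => a i x + b i x, fun i => (ha i).add (hb i), fun x hx => ?_⟩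
  simp only [h x hx, h' x hx, add_mul, Finset.sum_add_distrib]

theorem Jet.mul {c : Vec → ℝ} (hc : An V c) (h : Jet V Ω w u) : Jet V Ω w (fun x => c x * u x) := by
  obtain ⟨a, ha, h⟩ := h
  refine ⟨fun i x => c x * a i x, fun i => hc.mul (ha i), fun x hx => ?_⟩
  simp only [h x hx, Finset.mul_sum, mul_assoc]

theorem Jet.neg (h : Jet V Ω w u) : Jet V Ω w (fun x => - u x) :=
  (h.mul (An.const (-1))).congr (by simp)

theorem Jet.sub (h : Jet V Ω w u) (h' : Jet V Ω w v) : Jet V Ω w (fun x => u x - v x) :=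
  (h.add h'.neg).congr (by simp [sub_eq_add_neg])

theorem Jet.zero : Jet V Ω w (fun _ => 0) := ⟨fun _ _ => 0, fun _ => .const 0, by simp⟩

theorem Jet.sum {κ : Type} [DecidableEq κ] (s : Finset κ) {u : κ → Vec → ℝ}
    (h : ∀ m, Jet V Ω w (u m)) : Jet V Ω w (fun x => ∑ m ∈ s, u m x) := by
  induction s using Finset.induction_on with
  | empty => simpa using Jet.zero
  | insert a s ha ih =>
    simp only [Finset.sum_insert ha]
    exact (h a).add ih

theorem Jet.base [DecidableEq ι] (i : ι) : Jet V Ω w (w i) := by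
  refine ⟨fun j _ => if j = i then 1 else 0, fun j => .const _, fun x _ => ?_⟩
  simp

/-- First prolongation of a family of unknowns. -/
def w1 (w : ι → Vec → ℝ) : Option (Fin 3) × ι → Vec → ℝ
  | (none, i) => w i
  | (some k, i) => fun x => pd k (w i) x

theorem pd_congrOn (hΩ : IsOpen Ω) (h : ∀ y ∈ Ω, u y = v y) (k : Fin 3) {x : Vec} (hx : x ∈ Ω) :
    pd k u x = pd k v x :=
  pd_eventually (Filter.eventually_of_mem (hΩ.mem_nhds hx) h) k

theorem Jet.up [DecidableEq ι] (h : Jet V Ω w u) : Jet V Ω (w1 w) u := by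
  obtain ⟨a, ha, h⟩ := h
  exact (Jet.sum univ fun i => (Jet.base (V := V) (Ω := Ω) (w := w1 w) (none, i)).mul (ha i)).congr
    fun x hx => (h x hx).symm

theorem Jet.pd [DecidableEq ι] (hΩ : IsOpen Ω) (hΩV : Ω ⊆ V)
    (hw : ∀ i, ContDiff ℝ (⊤ : ℕ∞) (w i)) (h : Jet V Ω w u) (k : Fin 3) :
    Jet V Ω (w1 w) (fun x => pd k u x) := by
  obtain ⟨a, ha, h⟩ := h
  refine (Jet.sum univ fun i =>
    ((Jet.base (V := V) (Ω := Ω) (w := w1 w) (none, i)).mul ((ha i).pd k)).add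
    ((Jet.base (V := V) (Ω := Ω) (w := w1 w) (some k, i)).mul (ha i))).congr fun x hx => ?_
  have had : ∀ i, DifferentiableAt ℝ (a i) x := fun i => ((ha i).sm x (hΩV hx)).diffTop
  have hwd : ∀ i, DifferentiableAt ℝ (w i) x := fun i => (hw i).contDiffAt.diffTop
  rw [pd_congrOn hΩ h k hx, pd_sum (fun i _ => (had i).fun_mul (hwd i))]
  simp_rw [pd_mul (had _) (hwd _)]
  rfl

theorem pd_comm {u : Vec → ℝ} {x : Vec} (h : ContDiffAt ℝ (⊤ : ℕ∞) u x) (a b : Fin 3) :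
    pd a (fun y => pd b u y) x = pd b (fun y => pd a u y) x := by
  have hs : IsSymmSndFDerivAt ℝ u x := h.isSymmSndFDerivAt (by
    simp only [minSmoothness_of_isRCLikeNormedField]
    exact WithTop.coe_le_coe.2 (le_top : (2 : ℕ∞) ≤ ⊤))
  have hd : DifferentiableAt ℝ (fderiv ℝ u) x :=
    (h.fderiv_right (m := ((⊤ : ℕ∞) : WithTop ℕ∞)) (by exact_mod_cast le_rfl)).differentiableAt
      (by simp)
  have key : ∀ v w : Vec, fderiv ℝ (fun y => fderiv ℝ u y w) x v = fderiv ℝ (fderiv ℝ u) x v w := by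
    intro v w
    rw [fderiv_clm_apply hd (differentiableAt_const w)]
    simp
  unfold _root_.pd
  rw [key, key]
  exact hs _ _

theorem pd_const_mul {u : Vec → ℝ} {x : Vec} (hu : DifferentiableAt ℝ u x) (c : ℝ) (k : Fin 3) :
    pd k (fun y => c * u y) x = c * pd k u x := by
  unfold _root_.pd
  rw [fderiv_const_mul hu]
  simp

end Jets

section Weak

/-! ## The pointwise form of the KID equations -/

theorem hE_tsupport {E : Vec → Mtx} {φ : Vec → ℝ} : tsupport (hE E φ) ⊆ tsupport φ := by
  refine closure_minimal (fun x hx => ?_) (isClosed_tsupport φ)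
  by_contra hc
  apply hx
  funext i j
  simp [hE, image_eq_zero_of_notMem_tsupport hc]

theorem hE_smooth {E : Vec → Mtx} {φ : Vec → ℝ} (hEs : ContDiff ℝ (⊤ : ℕ∞) E)
    (hφ : ContDiff ℝ (⊤ : ℕ∞) φ) : ContDiff ℝ (⊤ : ℕ∞) (hE E φ) := by
  have : hE E φ = fun x => φ x • E x := by
    funext x i j
    simp [hE]
  rw [this]
  exact hφ.smul hEs

variable {V Ω O : Set Vec} {g p : Vec → Mtx} {r₀ : ℝ} {f : Vec → ℝ} {X : Vec → Vec}

theorem SmOn.mul {u v : Vec → ℝ} (h : SmOn Ω u) (h' : SmOn Ω v) : SmOn Ω (fun x => u x * v x) :=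
  fun x hx => (h x hx).mul (h' x hx)
theorem SmOn.add {u v : Vec → ℝ} (h : SmOn Ω u) (h' : SmOn Ω v) : SmOn Ω (fun x => u x + v x) :=
  fun x hx => (h x hx).add (h' x hx)
theorem SmOn.neg {u : Vec → ℝ} (h : SmOn Ω u) : SmOn Ω (fun x => - u x) :=
  fun x hx => (h x hx).neg
theorem SmOn.sum {ι : Type} {s : Finset ι} {u : ι → Vec → ℝ} (h : ∀ i, SmOn Ω (u i)) :
    SmOn Ω (fun x => ∑ i ∈ s, u i x) :=
  fun x hx => ContDiffAt.sum fun i _ => h i x hx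

theorem weak_of_ops (G : Geo V g p) (hΩ : IsOpen Ω) (hΩV : Ω ⊆ V) (hΩr : Ω ⊆ {x | r₀ < rad x})
    (hf : ContDiff ℝ (⊤ : ℕ∞) f) (hX : ContDiff ℝ (⊤ : ℕ∞) X)
    {q b c LH} (hH : OpSym V q b c LH) {bM : Fin 3 → Fin 3 → Vec → ℝ} {cM : Fin 3 → Vec → ℝ}
    {LM : Fin 3 → Opr} (hM : ∀ i, OpSym V (fun _ _ _ => 0) (bM i) (cM i) (LM i))
    (h : ∀ φ, TestFn Ω φ → ∫ x in Sig r₀, (-(LH φ x) * f x + ∑ i, (2 * LM i φ x) * X x i)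
        * dens g x = 0) :
    ∀ x ∈ Ω, (∑ c, ∑ d, pd d (fun y => pd c (fun z => -(q c d z * (f z * dens g z))) y) x)
      - (∑ k, pd k (fun y => (-(b k y * f y) + ∑ i, 2 * (bM i k y * X y i)) * dens g y) x)
      + (-(c x * f x) + ∑ i, 2 * (cM i x * X x i)) * dens g x = 0 := by
  have sf : SmOn Ω f := fun x _ => hf.contDiffAt
  have sX : ∀ i, SmOn Ω (fun x => X x i) := fun i x _ => (contDiff_pi.1 hX i).contDiffAt
  have an : ∀ {a}, An V a → SmOn Ω a := fun ha x hx => ha.sm x (hΩV hx)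
  have sd : SmOn Ω (fun x => dens g x) := an G.dens
  have s2 : SmOn Ω (fun _ => (2 : ℝ)) := fun x _ => contDiffAt_const
  refine weak_form hΩ _ _ (fun x => (-(c x * f x) + ∑ i, 2 * (cM i x * X x i)) * dens g x)
    (fun c d => ((an (hH.1 c d)).mul (sf.mul sd)).neg)
    (fun k => (((an (hH.2.1 k)).mul sf).neg.add
      (SmOn.sum fun i => s2.mul ((an ((hM i).2.1 k)).mul (sX i)))).mul sd)
    ((((an hH.2.2.1).mul sf).neg.add
      (SmOn.sum fun i => s2.mul ((an ((hM i).2.2.1)).mul (sX i)))).mul sd) (fun φ hφ => ?_)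
  have h0 := h φ hφ
  rw [setIntegral_eq_integral_of_forall_compl_eq_zero] at h0
  · rw [← h0]
    congr 1
    funext x
    by_cases hx : x ∈ tsupport φ
    · have hxV := hΩV (hφ.2.2 hx)
      rw [hH.2.2.2.2 φ hφ.1 x hxV]
      simp_rw [(hM _).2.2.2.2 φ hφ.1 x hxV]
      simp only [Fin.sum_univ_three]
      ring
    · rw [hH.2.2.2.1 φ x hx]
      simp_rw [(hM _).2.2.2.1 φ x hx]
      have e1 : ∀ c d, pd c (fun y => pd d φ y) x = 0 := fun c d =>
        pd_zero_of_notMem (fun hc => hx (tsupport_pd φ d hc)) c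
      simp [e1, pd_zero_of_notMem hx, image_eq_zero_of_notMem_tsupport hx]
  · intro x hx
    have hx' : x ∉ tsupport φ := fun hc => by
      have h1 : r₀ < rad x := hΩr (hφ.2.2 hc)
      exact hx h1.le
    rw [hH.2.2.2.1 φ x hx']
    simp_rw [(hM _).2.2.2.1 φ x hx']
    simp

theorem kid_h (hΩO : Ω ⊆ O) (hΩr : Ω ⊆ {x | r₀ < rad x}) (hkid : KIDon g p r₀ (f, X) O)
    {E : Vec → Mtx} (hEs : ContDiff ℝ (⊤ : ℕ∞) E) (hEy : ∀ x i j, E x i j = E x j i)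
    (φ : Vec → ℝ) (hφ : TestFn Ω φ) :
    ∫ x in Sig r₀, (-(DHlin g p (hE E φ) (fun _ _ _ => 0) x) * f x
      + ∑ i, (2 * DMlin g p (hE E φ) (fun _ _ _ => 0) i x) * X x i) * dens g x = 0 := by
  have h0 : tsupport (fun (_ : Vec) (_ _ : Fin 3) => (0 : ℝ)) = ∅ := by
    rw [tsupport_eq_empty_iff]; rfl
  exact hkid (hE E φ) (fun _ _ _ => 0) (hE_smooth hEs hφ.1) contDiff_const
    (fun x i j => by simp [hE, hEy x i j]) (fun _ _ _ => rfl)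
    (hφ.2.1.of_isClosed_subset (isClosed_tsupport _) hE_tsupport)
    (by rw [h0]; exact isCompact_empty)
    (fun x hx => ⟨hΩO (hφ.2.2 (hE_tsupport hx)), hΩr (hφ.2.2 (hE_tsupport hx))⟩)
    (by rw [h0]; exact Set.empty_subset _)

theorem kid_w (hΩO : Ω ⊆ O) (hΩr : Ω ⊆ {x | r₀ < rad x}) (hkid : KIDon g p r₀ (f, X) O)
    {E : Vec → Mtx} (hEs : ContDiff ℝ (⊤ : ℕ∞) E) (hEy : ∀ x i j, E x i j = E x j i)
    (φ : Vec → ℝ) (hφ : TestFn Ω φ) :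
    ∫ x in Sig r₀, (-(DHlin g p (fun _ _ _ => 0) (hE E φ) x) * f x
      + ∑ i, (2 * DMlin g p (fun _ _ _ => 0) (hE E φ) i x) * X x i) * dens g x = 0 := by
  have h0 : tsupport (fun (_ : Vec) (_ _ : Fin 3) => (0 : ℝ)) = ∅ := by
    rw [tsupport_eq_empty_iff]; rfl
  exact hkid (fun _ _ _ => 0) (hE E φ) contDiff_const (hE_smooth hEs hφ.1)
    (fun _ _ _ => rfl) (fun x i j => by simp [hE, hEy x i j])
    (by rw [h0]; exact isCompact_empty)
    (hφ.2.1.of_isClosed_subset (isClosed_tsupport _) hE_tsupport)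
    (by rw [h0]; exact Set.empty_subset _)
    (fun x hx => ⟨hΩO (hφ.2.2 (hE_tsupport hx)), hΩr (hφ.2.2 (hE_tsupport hx))⟩)

/-! ### Special choices of the tensor `E` -/

/-- Symmetric basis tensor, with lowered indices. -/
def Ew (g : Vec → Mtx) (a b : Fin 3) : Vec → Mtx := fun x i j =>
  g x i a * g x j b + g x i b * g x j a

/-- Trace-adjusted symmetric basis tensor, with lowered indices. -/
def Eh (g : Vec → Mtx) (a b : Fin 3) : Vec → Mtx := fun x i j =>
  g x i a * g x j b + g x i b * g x j a - g x a b * g x i j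

theorem Ew_smooth (hg : ContDiff ℝ (⊤ : ℕ∞) g) (a b : Fin 3) : ContDiff ℝ (⊤ : ℕ∞) (Ew g a b) := by
  have h : ∀ i j, ContDiff ℝ (⊤ : ℕ∞) (fun x => g x i j) := fun i j =>
    contDiff_pi.1 (contDiff_pi.1 hg i) j
  exact contDiff_pi.2 fun i => contDiff_pi.2 fun j =>
    ((h i a).mul (h j b)).add ((h i b).mul (h j a))

theorem Eh_smooth (hg : ContDiff ℝ (⊤ : ℕ∞) g) (a b : Fin 3) : ContDiff ℝ (⊤ : ℕ∞) (Eh g a b) := by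
  have h : ∀ i j, ContDiff ℝ (⊤ : ℕ∞) (fun x => g x i j) := fun i j =>
    contDiff_pi.1 (contDiff_pi.1 hg i) j
  exact contDiff_pi.2 fun i => contDiff_pi.2 fun j =>
    (((h i a).mul (h j b)).add ((h i b).mul (h j a))).sub ((h a b).mul (h i j))

theorem Geo.Ew_an (G : Geo V g p) (a b i j : Fin 3) : An V (fun x => Ew g a b x i j) :=
  ((G.ga i a).mul (G.ga j b)).add ((G.ga i b).mul (G.ga j a))

theorem Geo.Eh_an (G : Geo V g p) (a b i j : Fin 3) : An V (fun x => Eh g a b x i j) :=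
  (((G.ga i a).mul (G.ga j b)).add ((G.ga i b).mul (G.ga j a))).sub ((G.ga a b).mul (G.ga i j))

/-- The covector field associated with `X`. -/
def low (g : Vec → Mtx) (X : Vec → Vec) (b : Fin 3) (x : Vec) : ℝ := ∑ i, g x i b * X x i

theorem Geo.Ew_contr (G : Geo V g p) {x : Vec} (hx : x ∈ V) (a b k : Fin 3) :
    ∑ i, 2 * ((∑ l, minv (g x) k l * Ew g a b x l i) * X x i)
      = (if k = a then 1 else 0) * (2 * low g X b x) + (if k = b then 1 else 0) * (2 * low g X a x) := by
  have h1 : ∀ i, ∑ l, minv (g x) k l * Ew g a b x l i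
      = (if k = a then 1 else 0) * g x i b + (if k = b then 1 else 0) * g x i a := by
    intro i
    rw [← G.mig hx k a, ← G.mig hx k b, Finset.sum_mul, Finset.sum_mul, ← Finset.sum_add_distrib]
    refine Finset.sum_congr rfl fun l _ => ?_
    simp only [Ew]; ring
  simp_rw [h1]
  unfold low
  simp only [Fin.sum_univ_three]
  ring

theorem Geo.Eh_contr (G : Geo V g p) {x : Vec} (hx : x ∈ V) (a b c d : Fin 3) :
    (-∑ i, ∑ j, minv (g x) i j *
          if c = i then if d = j then trT g (Eh g a b) x else 0 else 0)
        + ∑ i, ∑ j, ∑ a', ∑ b', minv (g x) i a' * minv (g x) j b' *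
          (if c = a' then if d = b' then Eh g a b x i j else 0 else 0)
      = (if c = a then 1 else 0) * (if d = b then 1 else 0)
        + (if c = b then 1 else 0) * (if d = a then 1 else 0) := by
  have hs := G.mis x
  have gs := G.gs x
  have mig := G.mig hx
  have prod : ∀ m n : Fin 3, ∑ i, ∑ j, minv (g x) i c * minv (g x) j d * (g x i m * g x j n)
      = (if c = m then 1 else 0) * (if d = n then 1 else 0) := by
    intro m n
    rw [← mig c m, ← mig d n, Finset.sum_mul_sum]
    refine Finset.sum_congr rfl fun i _ => Finset.sum_congr rfl fun j _ => ?_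
    rw [hs c i, hs d j]; ring
  have prod2 : ∑ i, ∑ j, minv (g x) i c * minv (g x) j d * g x i j = minv (g x) c d := by
    have : ∀ j, ∑ i, minv (g x) i c * minv (g x) j d * g x i j
        = minv (g x) j d * if c = j then 1 else 0 := by
      intro j
      rw [← mig c j, Finset.mul_sum]
      refine Finset.sum_congr rfl fun i _ => ?_
      rw [hs c i]; ring
    rw [Finset.sum_comm]
    simp_rw [this]
    simp
  have tr1 : ∀ m n : Fin 3, ∑ i, ∑ j, minv (g x) i j * (g x i m * g x j n) = g x m n := by
    intro m n
    have : ∀ i, ∑ j, minv (g x) i j * (g x i m * g x j n)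
        = g x i m * if i = n then 1 else 0 := by
      intro i
      rw [← mig i n, Finset.mul_sum]
      exact Finset.sum_congr rfl fun j _ => by ring
    simp_rw [this]
    simp [gs n m]
  have tr2 : ∑ i, ∑ j, minv (g x) i j * g x i j = 3 := by
    have : ∀ i, ∑ j, minv (g x) i j * g x i j = 1 := by
      intro i
      have := mig i i
      simp only [if_true] at this
      rw [← this]
      exact Finset.sum_congr rfl fun j _ => by rw [gs i j]
    simp_rw [this]
    simp
  have tr : trT g (Eh g a b) x = - g x a b := by
    have e : trT g (Eh g a b) x = (∑ i, ∑ j, minv (g x) i j * (g x i a * g x j b))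
        + (∑ i, ∑ j, minv (g x) i j * (g x i b * g x j a))
        - g x a b * ∑ i, ∑ j, minv (g x) i j * g x i j := by
      simp only [trT, Eh, Finset.mul_sum, ← Finset.sum_add_distrib, ← Finset.sum_sub_distrib]
      exact Finset.sum_congr rfl fun i _ => Finset.sum_congr rfl fun j _ => by ring
    rw [e, tr1, tr1, tr2, gs b a]; ring
  have e2 : ∑ i, ∑ j, ∑ a', ∑ b', minv (g x) i a' * minv (g x) j b' *
          (if c = a' then if d = b' then Eh g a b x i j else 0 else 0)
      = ∑ i, ∑ j, minv (g x) i c * minv (g x) j d * Eh g a b x i j := by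
    refine Finset.sum_congr rfl fun i _ => Finset.sum_congr rfl fun j _ => ?_
    simp only [mul_ite, mul_zero, Finset.sum_ite_irrel, Finset.sum_const_zero,
      Finset.sum_ite_eq, Finset.mem_univ, if_true]
  have e1 : ∑ i, ∑ j, minv (g x) i j *
          (if c = i then if d = j then trT g (Eh g a b) x else 0 else 0)
      = minv (g x) c d * trT g (Eh g a b) x := by
    simp only [mul_ite, mul_zero, Finset.sum_ite_irrel, Finset.sum_const_zero,
      Finset.sum_ite_eq, Finset.mem_univ, if_true]
  have e3 : ∑ i, ∑ j, minv (g x) i c * minv (g x) j d * Eh g a b x i j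
      = (∑ i, ∑ j, minv (g x) i c * minv (g x) j d * (g x i a * g x j b))
        + (∑ i, ∑ j, minv (g x) i c * minv (g x) j d * (g x i b * g x j a))
        - g x a b * ∑ i, ∑ j, minv (g x) i c * minv (g x) j d * g x i j := by
    simp only [Eh, Finset.mul_sum, ← Finset.sum_add_distrib, ← Finset.sum_sub_distrib]
    exact Finset.sum_congr rfl fun i _ => Finset.sum_congr rfl fun j _ => by ring
  rw [e2, e1, e3, prod, prod, prod2, tr]
  ring

end Weak

section Prolong

variable {V Ω O : Set Vec} {g p : Vec → Mtx} {r₀ : ℝ} {f : Vec → ℝ} {X : Vec → Vec}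

/-- The unknowns: `f` and the covector field dual to `X`. -/
def unk (g : Vec → Mtx) (f : Vec → ℝ) (X : Vec → Vec) : Option (Fin 3) → Vec → ℝ
  | none => f
  | some b => fun x => low g X b x

theorem low_smooth (hg : ContDiff ℝ (⊤ : ℕ∞) g) (hX : ContDiff ℝ (⊤ : ℕ∞) X) (b : Fin 3) :
    ContDiff ℝ (⊤ : ℕ∞) (fun x => low g X b x) := by
  unfold low
  exact ContDiff.sum fun i _ => (contDiff_pi.1 (contDiff_pi.1 hg i) b).mul (contDiff_pi.1 hX i)

theorem unk_smooth (hg : ContDiff ℝ (⊤ : ℕ∞) g) (hf : ContDiff ℝ (⊤ : ℕ∞) f)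
    (hX : ContDiff ℝ (⊤ : ℕ∞) X) : ∀ i, ContDiff ℝ (⊤ : ℕ∞) (unk g f X i)
  | none => hf
  | some b => low_smooth hg hX b

theorem geo_recov (G : Geo V g p) {x : Vec} (hx : x ∈ V) (i : Fin 3) :
    ∑ m, minv (g x) i m * low g X m x = X x i := by
  unfold low
  simp only [Finset.mul_sum]
  rw [Finset.sum_comm]
  have : ∀ j, ∑ m, minv (g x) i m * (g x j m * X x j) = (if i = j then 1 else 0) * X x j := by
    intro j
    rw [← G.mig hx i j, Finset.sum_mul]
    exact Finset.sum_congr rfl fun m _ => by rw [G.gs x j m]; ring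
  simp_rw [this]
  simp

theorem geo_jetX (G : Geo V g p) (hΩV : Ω ⊆ V) (i : Fin 3) :
    Jet V Ω (unk g f X) (fun x => X x i) :=
  (Jet.sum univ fun m => Jet.mul (G.mi i m)
    (Jet.base (V := V) (Ω := Ω) (w := unk g f X) (some m))).congr
    fun x hx => geo_recov G (hΩV hx) i

theorem geo_jetf : Jet V Ω (unk g f X) f := Jet.base (w := unk g f X) none

theorem geo_jet_sym (G : Geo V g p) (hΩ : IsOpen Ω) (hΩV : Ω ⊆ V)
    (hΩO : Ω ⊆ O) (hΩr : Ω ⊆ {x | r₀ < rad x})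
    (hg : ContDiff ℝ (⊤ : ℕ∞) g)
    (hf : ContDiff ℝ (⊤ : ℕ∞) f) (hX : ContDiff ℝ (⊤ : ℕ∞) X)
    (hkid : KIDon g p r₀ (f, X) O) (a b : Fin 3) :
    Jet V Ω (unk g f X) (fun x => pd a (fun y => low g X b y) x + pd b (fun y => low g X a y) x) := by
  obtain ⟨cH, hH⟩ := G.s0_DHw (G.Ew_an a b)
  choose cM hM using fun i => G.s1_DMw (G.Ew_an a b) i
  have key := weak_of_ops G hΩ hΩV hΩr hf hX hH hM
    (kid_w hΩO hΩr hkid (Ew_smooth hg a b) (fun x i j => by simp [Ew]; ring))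
  have hJ : Jet V Ω (unk g f X) (fun x => (dens g x)⁻¹ * ((1/2) *
      ((-(cH x * f x) + ∑ i, 2 * (cM i x * X x i)) * dens g x)
      - (pd a (fun y => dens g y) x * low g X b x + pd b (fun y => dens g y) x * low g X a x))) := by
    have j1 : Jet V Ω (unk g f X) (fun x => (-(cH x * f x) + ∑ i, 2 * (cM i x * X x i)) * dens g x) :=
      ((((geo_jetf).mul hH.2.2.1).neg.add (Jet.sum univ fun i =>
        ((geo_jetX G hΩV i).mul (hM i).2.2.1).mul (An.const 2))).mul G.dens).congr
        (fun x _ => by ring)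
    exact ((j1.mul (An.const (1/2))).sub
      (((Jet.base (w := unk g f X) (some b)).mul (G.dens.pd a)).add
        ((Jet.base (w := unk g f X) (some a)).mul (G.dens.pd b)))).mul
      (G.dens.inv fun x hx => (G.dens_pos hx).ne')
  refine hJ.congr fun x hx => ?_
  have k := key x hx
  have hd : DifferentiableAt ℝ (fun y => dens g y) x := (G.dens.sm x (hΩV hx)).diffTop
  have hl : ∀ b, DifferentiableAt ℝ (fun y => low g X b y) x :=
    fun b => (low_smooth hg hX b).contDiffAt.diffTop
  have hu : ∀ b, DifferentiableAt ℝ (fun y => dens g y * low g X b y) x :=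
    fun b => hd.fun_mul (hl b)
  have hB : ∀ k, pd k (fun y => (-(0 * f y) + ∑ i, 2 * ((∑ l, minv (g y) k l * Ew g a b y l i)
      * X y i)) * dens g y) x
      = (if k = a then 1 else 0) * (2 * pd k (fun y => dens g y * low g X b y) x)
        + (if k = b then 1 else 0) * (2 * pd k (fun y => dens g y * low g X a y) x) := by
    intro k
    rw [pd_congrOn (v := fun y => (if k = a then 2 else 0) * (dens g y * low g X b y)
      + (if k = b then 2 else 0) * (dens g y * low g X a y)) hΩ ?_ k hx]
    · rw [pd_add ((hu b).const_mul _) ((hu a).const_mul _), pd_const_mul (hu b),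
        pd_const_mul (hu a)]
      split_ifs <;> ring
    · intro y hy
      rw [G.Ew_contr (hΩV hy)]
      split_ifs <;> ring
  simp_rw [hB] at k
  simp only [zero_mul, neg_zero, Finset.sum_add_distrib, ite_mul, one_mul, Finset.sum_ite_eq',
    Finset.mem_univ, if_true] at k
  have z : ∀ c d, pd d (fun y => pd c (fun _ => (0:ℝ)) y) x = 0 := by intro c d; simp [pd]
  simp only [z, Finset.sum_const_zero, zero_sub] at k
  rw [pd_mul hd (hl b), pd_mul hd (hl a)] at k
  have hp := (G.dens_pos (hΩV hx)).ne'
  rw [inv_mul_eq_iff_eq_mul₀ hp]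
  linarith

theorem geo_jet_hess (G : Geo V g p) (hΩ : IsOpen Ω) (hΩV : Ω ⊆ V)
    (hΩO : Ω ⊆ O) (hΩr : Ω ⊆ {x | r₀ < rad x})
    (hg : ContDiff ℝ (⊤ : ℕ∞) g)
    (hf : ContDiff ℝ (⊤ : ℕ∞) f) (hX : ContDiff ℝ (⊤ : ℕ∞) X)
    (hkid : KIDon g p r₀ (f, X) O) (a b : Fin 3) :
    Jet V Ω (w1 (unk g f X)) (fun x => pd a (fun y => pd b f y) x) := by
  obtain ⟨bH, cH, hH⟩ := G.s2_DH (G.Eh_an a b)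
  choose bM cM hM using fun i => G.e1_DM (G.Eh_an a b) i
  have key := weak_of_ops G hΩ hΩV hΩr hf hX hH hM
    (kid_h hΩO hΩr hkid (Eh_smooth hg a b) (fun x i j => by simp [Eh, G.gs x i j]; ring))
  have hw := unk_smooth hg hf hX
  have j0 : ∀ (c : Vec → ℝ) (d : Fin 3 → Vec → ℝ), An V c → (∀ i, An V (d i)) →
      Jet V Ω (unk g f X) (fun x => (-(c x * f x) + ∑ i, 2 * (d i x * X x i)) * dens g x) :=
    fun c d hc hd =>
      ((((geo_jetf).mul hc).neg.add (Jet.sum univ fun i =>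
        ((geo_jetX G hΩV i).mul (hd i)).mul (An.const 2))).mul G.dens).congr (fun x _ => by ring)
  have jf : ∀ k, Jet V Ω (w1 (unk g f X)) (fun x => pd k f x) :=
    fun k => Jet.base (w := w1 (unk g f X)) (some k, none)
  have jf0 : Jet V Ω (w1 (unk g f X)) f := Jet.base (w := w1 (unk g f X)) (none, none)
  have hJ := (((((j0 cH cM hH.2.2.1 fun i => (hM i).2.2.1).up.sub
    (Jet.sum univ fun k => (j0 (bH k) (fun i => bM i k) (hH.2.1 k) fun i => (hM i).2.1 k).pd
      hΩ hΩV hw k)).mul (An.const (1/2))).sub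
    ((((jf b).mul (G.dens.pd a)).add ((jf a).mul (G.dens.pd b))).add
      (jf0.mul ((G.dens.pd b).pd a))))).mul (G.dens.inv fun x hx => (G.dens_pos hx).ne')
  refine hJ.congr fun x hx => ?_
  have k := key x hx
  have sd : ∀ y ∈ Ω, ContDiffAt ℝ (⊤ : ℕ∞) (fun y => dens g y) y :=
    fun y hy => G.dens.sm y (hΩV hy)
  have sU : ∀ y ∈ Ω, ContDiffAt ℝ (⊤ : ℕ∞) (fun y => f y * dens g y) y :=
    fun y hy => hf.contDiffAt.mul (sd y hy)
  have hQ : ∀ c d, pd d (fun y => pd c (fun z => -(((-∑ i, ∑ j, minv (g z) i j *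
          if c = i then if d = j then trT g (Eh g a b) z else 0 else 0)
        + ∑ i, ∑ j, ∑ a', ∑ b', minv (g z) i a' * minv (g z) j b' *
          (if c = a' then if d = b' then Eh g a b z i j else 0 else 0)) * (f z * dens g z))) y) x
      = (-((if c = a then 1 else 0) * (if d = b then 1 else 0)
        + (if c = b then 1 else 0) * (if d = a then 1 else 0))) *
        pd d (fun y => pd c (fun z => f z * dens g z) y) x := by
    intro c d
    rw [← pd_const_mul (contDiffAt_pd (sU x hx) c).diffTop]
    refine pd_congrOn hΩ (fun y hy => ?_) d hx
    rw [← pd_const_mul (sU y hy).diffTop]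
    refine pd_congrOn hΩ (fun z hz => ?_) c hy
    rw [G.Eh_contr (hΩV hz)]
    ring
  simp_rw [hQ] at k
  have hsum : ∀ T : Fin 3 → Fin 3 → ℝ, ∑ c, ∑ d, (-((if c = a then 1 else 0) * (if d = b then 1 else 0)
        + (if c = b then 1 else 0) * (if d = a then 1 else 0))) * T c d = -(T a b + T b a) := by
    intro T
    simp only [neg_mul, add_mul, Finset.sum_neg_distrib, Finset.sum_add_distrib, mul_assoc,
      ite_mul, one_mul, zero_mul, Finset.sum_ite_irrel, Finset.sum_const_zero,
      Finset.sum_ite_eq', Finset.mem_univ, if_true]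
  rw [hsum (fun c d => pd d (fun y => pd c (fun z => f z * dens g z) y) x),
    pd_comm (sU x hx) b a] at k
  have e : pd a (fun y => pd b (fun z => f z * dens g z) y) x
      = pd a (fun y => pd b f y) x * dens g x + pd b f x * pd a (fun y => dens g y) x
        + (pd a f x * pd b (fun y => dens g y) x
          + f x * pd a (fun y => pd b (fun z => dens g z) y) x) := by
    have df := (hf.contDiffAt (x := x)).diffTop
    have dd := (sd x hx).diffTop
    have dfb := (contDiffAt_pd (hf.contDiffAt (x := x)) b).diffTop
    have ddb := (contDiffAt_pd (sd x hx) b).diffTop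
    rw [pd_congrOn (v := fun y => pd b f y * dens g y + f y * pd b (fun z => dens g z) y) hΩ
      (fun y hy => pd_mul (hf.contDiffAt (x := y)).diffTop (sd y hy).diffTop b) a hx,
      pd_add (dfb.fun_mul dd) (df.fun_mul ddb), pd_mul dfb dd, pd_mul df ddb]
  rw [e] at k
  have hp := (G.dens_pos (hΩV hx)).ne'
  rw [inv_mul_eq_iff_eq_mul₀ hp]
  linarith

theorem geo_jet_closed (G : Geo V g p) (hΩ : IsOpen Ω) (hΩV : Ω ⊆ V)
    (hΩO : Ω ⊆ O) (hΩr : Ω ⊆ {x | r₀ < rad x})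
    (hg : ContDiff ℝ (⊤ : ℕ∞) g)
    (hf : ContDiff ℝ (⊤ : ℕ∞) f) (hX : ContDiff ℝ (⊤ : ℕ∞) X)
    (hkid : KIDon g p r₀ (f, X) O) (m : Fin 3) (I : Option (Fin 3) × Option (Fin 3)) :
    Jet V Ω (w1 (unk g f X)) (fun x => pd m (w1 (unk g f X) I) x) := by
  have hw := unk_smooth hg hf hX
  rcases I with ⟨_ | a, i⟩
  · exact (Jet.base (w := unk g f X) i).pd hΩ hΩV hw m
  rcases i with _ | b
  · exact geo_jet_hess G hΩ hΩV hΩO hΩr hg hf hX hkid m a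
  have s := fun a b => geo_jet_sym G hΩ hΩV hΩO hΩr hg hf hX hkid a b
  have hJ := ((((s a b).pd hΩ hΩV hw m).add ((s b m).pd hΩ hΩV hw a)).sub
    ((s m a).pd hΩ hΩV hw b)).mul (An.const (1/2))
  refine hJ.congr fun x hx => ?_
  have hl := fun b => (low_smooth hg hX b).contDiffAt (x := x)
  have hd : ∀ k b, DifferentiableAt ℝ (fun y => pd k (fun z => low g X b z) y) x :=
    fun k b => (contDiffAt_pd (hl b) k).diffTop
  rw [pd_add (hd _ _) (hd _ _), pd_add (hd _ _) (hd _ _), pd_add (hd _ _) (hd _ _)]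
  have c1 := pd_comm (hl b) m a
  have c2 := pd_comm (hl a) m b
  have c3 := pd_comm (hl m) a b
  change _ = pd m (fun y => pd a (fun z => low g X b z) y) x
  linarith

end Prolong

section Bdry

open Topology

theorem rad_sq (x : Vec) : rad x ^ 2 = x 0 ^ 2 + x 1 ^ 2 + x 2 ^ 2 :=
  Real.sq_sqrt (by positivity)

theorem rad_nonneg (x : Vec) : 0 ≤ rad x := Real.sqrt_nonneg _

theorem rad_cont : Continuous rad := by
  unfold rad
  fun_prop

theorem lt_rad {r₀ : ℝ} {x : Vec} (h : r₀ ^ 2 < x 0 ^ 2 + x 1 ^ 2 + x 2 ^ 2) : r₀ < rad x := by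
  unfold rad
  exact Real.lt_sqrt_of_sq_lt h

/-- `u` restricted to the sphere agrees near `x₀` with a function analytic at `x₀`. -/
def LB (r₀ : ℝ) (x₀ : Vec) (u : Vec → ℝ) : Prop :=
  ∃ G : Vec → ℝ, AnalyticAt ℝ G x₀ ∧ ∀ᶠ x in 𝓝 x₀, x ∈ bdry r₀ → G x = u x

variable {r₀ : ℝ} {x₀ : Vec} {u v : Vec → ℝ}

theorem LB.of_an (h : AnalyticAt ℝ u x₀) : LB r₀ x₀ u := ⟨u, h, by simp⟩

theorem LB.mul (h : LB r₀ x₀ u) (h' : LB r₀ x₀ v) : LB r₀ x₀ (fun x => u x * v x) := by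
  obtain ⟨G, hG, e⟩ := h
  obtain ⟨G', hG', e'⟩ := h'
  refine ⟨fun x => G x * G' x, hG.mul hG', ?_⟩
  filter_upwards [e, e'] with x h1 h2 hx
  rw [h1 hx, h2 hx]

theorem LB.add (h : LB r₀ x₀ u) (h' : LB r₀ x₀ v) : LB r₀ x₀ (fun x => u x + v x) := by
  obtain ⟨G, hG, e⟩ := h
  obtain ⟨G', hG', e'⟩ := h'
  refine ⟨fun x => G x + G' x, hG.add hG', ?_⟩
  filter_upwards [e, e'] with x h1 h2 hx
  rw [h1 hx, h2 hx]

theorem LB.sum {ι : Type} [Fintype ι] {u : ι → Vec → ℝ} (h : ∀ i, LB r₀ x₀ (u i)) :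
    LB r₀ x₀ (fun x => ∑ i, u i x) := by
  choose G hG e using h
  refine ⟨fun x => ∑ i, G i x, Finset.analyticAt_fun_sum _ fun i _ => hG i, ?_⟩
  filter_upwards [Filter.eventually_all.2 e] with x h1 hx
  exact Finset.sum_congr rfl fun i _ => h1 i hx

theorem LB.congr (h : LB r₀ x₀ u) (e : ∀ᶠ x in 𝓝 x₀, x ∈ bdry r₀ → u x = v x) : LB r₀ x₀ v := by
  obtain ⟨G, hG, e'⟩ := h
  refine ⟨G, hG, ?_⟩
  filter_upwards [e, e'] with x h1 h2 hx
  rw [h2 hx, h1 hx]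

theorem rad_an (h : 0 < rad x₀) : AnalyticAt ℝ rad x₀ := by
  have hp : ∀ i : Fin 3, AnalyticAt ℝ (fun x : Vec => x i) x₀ := fun i =>
    (ContinuousLinearMap.proj (R := ℝ) (φ := fun _ : Fin 3 => ℝ) i).analyticAt x₀
  have h1 : AnalyticAt ℝ (fun x : Vec => x 0 ^ 2 + x 1 ^ 2 + x 2 ^ 2) x₀ :=
    (((hp 0).fun_pow 2).fun_add ((hp 1).fun_pow 2)).fun_add ((hp 2).fun_pow 2)
  have h2 : AnalyticAt ℝ Real.sqrt (x₀ 0 ^ 2 + x₀ 1 ^ 2 + x₀ 2 ^ 2) :=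
    (Real.contDiffAt_sqrt (by rw [← rad_sq]; positivity)).analyticAt
  exact AnalyticAt.fun_comp (g := Real.sqrt)
    (f := fun x : Vec => x 0 ^ 2 + x 1 ^ 2 + x 2 ^ 2) h2 h1

theorem rad_smul {c : ℝ} (hc : 0 ≤ c) (x : Vec) : rad (c • x) = c * rad x := by
  unfold rad
  simp only [Pi.smul_apply, smul_eq_mul]
  rw [show (c * x 0) ^ 2 + (c * x 1) ^ 2 + (c * x 2) ^ 2
    = c ^ 2 * (x 0 ^ 2 + x 1 ^ 2 + x 2 ^ 2) by ring, Real.sqrt_mul (sq_nonneg c), Real.sqrt_sq hc]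

theorem glue_at (hr₀ : 0 < r₀) (hx₀ : x₀ ∈ bdry r₀) (h : LB r₀ x₀ u) :
    AnalyticAt ℝ (fun x => u ((r₀ / rad x) • x)) x₀ := by
  have hx₀' : rad x₀ = r₀ := hx₀
  obtain ⟨G, hG, e⟩ := h
  have hR : AnalyticAt ℝ (fun x : Vec => (r₀ / rad x) • x) x₀ :=
    (analyticAt_const.fun_div (rad_an (by rw [hx₀']; exact hr₀)) (by rw [hx₀']; exact hr₀.ne')).fun_smul
      analyticAt_id
  have hR0 : (r₀ / rad x₀) • x₀ = x₀ := by rw [hx₀', div_self hr₀.ne', one_smul]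
  have hc : Filter.Tendsto (fun x : Vec => (r₀ / rad x) • x) (𝓝 x₀) (𝓝 x₀) := by
    have := hR.continuousAt.tendsto
    rwa [hR0] at this
  have h1 : AnalyticAt ℝ (fun x => G ((r₀ / rad x) • x)) x₀ :=
    AnalyticAt.fun_comp (g := G) (f := fun x : Vec => (r₀ / rad x) • x)
      (by rw [hR0]; exact hG) hR
  refine h1.congr ?_
  filter_upwards [hc.eventually e,
    (rad_cont.continuousAt (x := x₀)).eventually_const_lt (show 0 < rad x₀ by rw [hx₀']; exact hr₀)] with x h2 h3
  apply h2
  show rad _ = r₀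
  rw [rad_smul (div_nonneg hr₀.le h3.le), div_mul_cancel₀ _ h3.ne']

theorem glue_scalar (hr₀ : 0 < r₀) (h : ∀ x₀ ∈ bdry r₀, LB r₀ x₀ u) : AnalyticOnBdry r₀ u := by
  refine ⟨fun x => u ((r₀ / rad x) • x), fun x hx => glue_at hr₀ hx (h x hx), fun x hx => ?_⟩
  have hx' : rad x = r₀ := hx
  simp only [hx', div_self hr₀.ne', one_smul]

theorem glue_vec (hr₀ : 0 < r₀) {u : Vec → Vec} (h : ∀ i, ∀ x₀ ∈ bdry r₀, LB r₀ x₀ (fun x => u x i)) :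
    AnalyticOnBdry r₀ u := by
  refine ⟨fun x => u ((r₀ / rad x) • x), fun x hx => ?_, fun x hx => ?_⟩
  · exact analyticAt_pi_iff.2 fun i => glue_at hr₀ hx (h i x hx)
  have hx' : rad x = r₀ := hx
  simp only [hx', div_self hr₀.ne', one_smul]

theorem an_smul_const {E F : Type} [NormedAddCommGroup E] [NormedSpace ℝ E] [NormedAddCommGroup F]
    [NormedSpace ℝ F] {a : E → ℝ} {x : E} (c : F) (h : AnalyticAt ℝ a x) :
    AnalyticAt ℝ (fun y => a y • c) x := h.fun_smul analyticAt_const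

/-- A closed linear system for smooth functions with analytic coefficients: the solutions are
analytic along the sphere. -/
theorem lb_of_jet {V Ω : Set Vec} (hV : IsOpen V) (hr₀ : 0 < r₀) (hx₀ : x₀ ∈ bdry r₀)
    (hx₀V : x₀ ∈ V) (hΩ : ∀ x, x ∈ Ω ↔ x ∈ V ∧ r₀ < rad x)
    {ι : Type} [Fintype ι] [DecidableEq ι] {w : ι → Vec → ℝ}
    (hw : ∀ i, ContDiff ℝ (⊤ : ℕ∞) (w i))
    (hJ : ∀ m i, Jet V Ω w (fun x => pd m (w i) x)) (i : ι) : LB r₀ x₀ (w i) := by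
  have hx₀' : rad x₀ = r₀ := hx₀
  choose a ha hJ using hJ
  let T : Fin 3 → ι → ι → ((ι → ℝ) →L[ℝ] (Vec →L[ℝ] (ι → ℝ))) := fun m i j =>
    (ContinuousLinearMap.proj (R := ℝ) (φ := fun _ : ι => ℝ) j).smulRight
      ((ContinuousLinearMap.proj (R := ℝ) (φ := fun _ : Fin 3 => ℝ) m).smulRight
        (Pi.single i (1 : ℝ) : ι → ℝ))
  let A : Vec → ((ι → ℝ) →L[ℝ] (Vec →L[ℝ] (ι → ℝ))) := fun x =>
    ∑ m, ∑ i, ∑ j, a m i j x • T m i j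
  have hA : AnalyticAt ℝ A x₀ := by
    refine Finset.analyticAt_fun_sum _ fun m _ => Finset.analyticAt_fun_sum _ fun i _ =>
      Finset.analyticAt_fun_sum _ fun j _ => ?_
    exact an_smul_const (F := (ι → ℝ) →L[ℝ] (Vec →L[ℝ] (ι → ℝ))) (T m i j) (ha m i j x₀ hx₀V)
  let W : Vec → ι → ℝ := fun x i => w i x
  have hW : ContDiff ℝ (⊤ : ℕ∞) W := contDiff_pi.2 hw
  obtain ⟨ρ', hρ', hball⟩ := Metric.isOpen_iff.1 hV x₀ hx₀V
  let Ω₀ : Set Vec := Metric.ball x₀ ρ' ∩ {x | r₀ < rad x}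
  have hΩ₀ : IsOpen Ω₀ := Metric.isOpen_ball.inter (isOpen_lt continuous_const rad_cont)
  have heq : ∀ x ∈ Ω₀, fderiv ℝ W x = A x (W x) := by
    intro x hx
    have hxΩ : x ∈ Ω := (hΩ x).2 ⟨hball hx.1, hx.2⟩
    ext h i
    have hd : ∀ i, DifferentiableAt ℝ (w i) x := fun i => (hw i).contDiffAt.diffTop
    have e1 : fderiv ℝ W x h i = fderiv ℝ (w i) x h := by
      have := fderiv_pi (𝕜 := ℝ) (φ := fun i x => w i x) (x := x) hd
      change fderiv ℝ (fun x i => w i x) x h i = _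
      rw [this]; rfl
    have e2 : fderiv ℝ (w i) x h = ∑ m, h m * pd m (w i) x := by
      conv_lhs => rw [← Finset.univ_sum_single h]
      rw [map_sum]
      refine Finset.sum_congr rfl fun m _ => ?_
      have : (Pi.single m (h m) : Vec) = h m • Pi.single m (1 : ℝ) := by
        rw [← Pi.single_smul]; simp
      rw [this, map_smul]; rfl
    rw [e1, e2]
    have e3 : A x (W x) h i = ∑ m, ∑ i', ∑ j, a m i' j x * (w j x * (h m * (Pi.single i' (1:ℝ) : ι → ℝ) i)) := by
      simp [A, T, W, _root_.sum_apply, Finset.sum_apply]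
    rw [e3]
    refine Finset.sum_congr rfl fun m _ => ?_
    have hJ' : pd m (w i) x = _ := hJ m i x hxΩ
    rw [hJ', Finset.sum_eq_single (a := i) (f := fun i' => ∑ j, a m i' j x * (w j x * (h m * (Pi.single i' (1:ℝ) : ι → ℝ) i)))]
    · rw [Finset.mul_sum]
      refine Finset.sum_congr rfl fun j _ => ?_
      simp; ring
    · intro i' _ hne
      simp [Pi.single_eq_of_ne (Ne.symm hne)]
    · simp
  obtain ⟨ρ, hρ, H⟩ := system_analytic W A Ω₀ hΩ₀ x₀ hW hA heq
  obtain ⟨ε, hε, hερ⟩ : ∃ ε : ℝ, 0 < ε ∧ ε * ‖x₀‖ < min ρ ρ' := by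
    refine ⟨min ρ ρ' / (‖x₀‖ + 1), by positivity, ?_⟩
    rw [div_mul_eq_mul_div, div_lt_iff₀ (by positivity)]
    have : 0 < min ρ ρ' := lt_min hρ hρ'
    nlinarith [norm_nonneg x₀]
  let y₀ : Vec := (1 + ε) • x₀
  have hdist : dist y₀ x₀ < min ρ ρ' := by
    rw [dist_eq_norm, show y₀ - x₀ = ε • x₀ by simp [y₀, add_smul], norm_smul,
      Real.norm_of_nonneg hε.le]
    exact hερ
  have hy₀r : rad y₀ = (1 + ε) * r₀ := by rw [rad_smul (by positivity), hx₀']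
  have hy₀ : y₀ ∈ Metric.ball x₀ ρ ∩ Ω₀ :=
    ⟨lt_of_lt_of_le hdist (min_le_left _ _), lt_of_lt_of_le hdist (min_le_right _ _), by
      show r₀ < rad y₀
      rw [hy₀r]; nlinarith⟩
  obtain ⟨G, hG, hGe⟩ := H y₀ hy₀
  refine ⟨fun x => G x i, analyticAt_pi_iff.1 hG i, ?_⟩
  have hx₀sq := rad_sq x₀
  rw [hx₀'] at hx₀sq
  have hy₀sq := rad_sq y₀
  rw [hy₀r] at hy₀sq
  have hdot : ∀ᶠ x : Vec in 𝓝 x₀, r₀ ^ 2 < y₀ 0 * x 0 + y₀ 1 * x 1 + y₀ 2 * x 2 := by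
    have hc : ContinuousAt (fun x : Vec => y₀ 0 * x 0 + y₀ 1 * x 1 + y₀ 2 * x 2) x₀ := by fun_prop
    refine hc.eventually_const_lt ?_
    simp only [y₀, Pi.smul_apply, smul_eq_mul]
    nlinarith [pow_pos hr₀ 2]
  filter_upwards [hdot, Metric.ball_mem_nhds x₀ hρ, Metric.ball_mem_nhds x₀ hρ'] with x h1 h2 h3 hx
  have hx' : rad x = r₀ := hx
  have hxsq := rad_sq x
  rw [hx'] at hxsq
  have := hGe x h2 (fun t ht => ?_)
  · rw [this]
  refine ⟨?_, ?_⟩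
  · have : y₀ + t • (x - y₀) = (1 - t) • y₀ + t • x := by
      rw [smul_sub, sub_smul, one_smul]; abel
    rw [this]
    exact convex_ball x₀ ρ' hy₀.2.1 h3 (by linarith [ht.2]) ht.1.le (by ring)
  · apply lt_rad
    simp only [Pi.add_apply, Pi.smul_apply, Pi.sub_apply, smul_eq_mul]
    have k1 : 0 < t := ht.1
    have k2 : 0 < 1 - t := by linarith [ht.2]
    have k3 : r₀ ^ 2 < ((1 + ε) * r₀) ^ 2 := by
      rw [mul_pow]
      nlinarith [mul_pos hε (pow_pos hr₀ 2), mul_pos (mul_pos hε hε) (pow_pos hr₀ 2)]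
    have e : (y₀ 0 + t * (x 0 - y₀ 0)) ^ 2 + (y₀ 1 + t * (x 1 - y₀ 1)) ^ 2
        + (y₀ 2 + t * (x 2 - y₀ 2)) ^ 2
        = (1 - t) ^ 2 * (y₀ 0 ^ 2 + y₀ 1 ^ 2 + y₀ 2 ^ 2)
          + 2 * (t * (1 - t)) * (y₀ 0 * x 0 + y₀ 1 * x 1 + y₀ 2 * x 2)
          + t ^ 2 * (x 0 ^ 2 + x 1 ^ 2 + x 2 ^ 2) := by ring
    rw [e, ← hy₀sq, ← hxsq]
    have m1 := mul_lt_mul_of_pos_left k3 (pow_pos k2 2)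
    have m2 := mul_lt_mul_of_pos_left h1 (show 0 < 2 * (t * (1 - t)) by positivity)
    nlinarith

end Bdry

section Fin

open Topology

theorem LB.nu {r₀ : ℝ} {x₀ : Vec} {V : Set Vec} {g p : Vec → Mtx} (G : Geo V g p) (hr₀ : 0 < r₀)
    (hx₀ : x₀ ∈ bdry r₀) (hx₀V : x₀ ∈ V) (hpd : (Matrix.of (g x₀)).PosDef) (i : Fin 3) :
    LB r₀ x₀ (fun x => nuV g x i) := by
  have hx₀' : rad x₀ = r₀ := hx₀
  have hp : ∀ i : Fin 3, AnalyticAt ℝ (fun x : Vec => x i) x₀ := fun i =>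
    (ContinuousLinearMap.proj (R := ℝ) (φ := fun _ : Fin 3 => ℝ) i).analyticAt x₀
  have hne : x₀ ≠ 0 := by
    rintro rfl
    have : rad 0 = 0 := by simp [rad]
    linarith
  have hQ : 0 < ∑ i, ∑ j, minv (g x₀) i j * x₀ i * x₀ j := by
    have h := hpd.inv.dotProduct_mulVec_pos hne
    refine lt_of_lt_of_eq h ?_
    simp only [dotProduct, Matrix.mulVec, Finset.mul_sum, minv, star_trivial]
    refine Finset.sum_congr rfl fun i _ => Finset.sum_congr rfl fun j _ => ?_
    ring
  have h1 : AnalyticAt ℝ (fun x => ∑ j, minv (g x) i j * x j) x₀ :=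
    Finset.analyticAt_fun_sum _ fun j _ => (G.mi i j x₀ hx₀V).fun_mul (hp j)
  have h2 : AnalyticAt ℝ (fun x => ∑ i, ∑ j, minv (g x) i j * x i * x j) x₀ :=
    Finset.analyticAt_fun_sum _ fun i _ => Finset.analyticAt_fun_sum _ fun j _ =>
      ((G.mi i j x₀ hx₀V).fun_mul (hp i)).fun_mul (hp j)
  have h3 : AnalyticAt ℝ Real.sqrt (∑ i, ∑ j, minv (g x₀) i j * x₀ i * x₀ j) :=
    (Real.contDiffAt_sqrt hQ.ne').analyticAt
  have h4 := AnalyticAt.fun_comp (g := Real.sqrt)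
    (f := fun x : Vec => ∑ i, ∑ j, minv (g x) i j * x i * x j) h3 h2
  exact LB.of_an (h1.fun_div h4 (Real.sqrt_pos.2 hQ).ne')

theorem kids_core (r₀ r₁ : ℝ) (hr₀ : 0 < r₀) (hr₁ : r₀ < r₁) (D : AFData r₀)
    (hanalytic_g : AnalyticOnNhd ℝ D.g {x | r₀ ≤ rad x ∧ rad x < r₁})
    (hanalytic_pi : AnalyticOnNhd ℝ D.pi {x | r₀ ≤ rad x ∧ rad x < r₁})
    (f : Vec → ℝ) (X : Vec → Vec)
    (hf : ContDiff ℝ (⊤ : ℕ∞) f) (hX : ContDiff ℝ (⊤ : ℕ∞) X)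
    (O : Set Vec) (hO : IsOpen O) (hObdry : bdry r₀ ⊆ O)
    (hkid : KIDon D.g D.pi r₀ (f, X) O) :
    AnalyticOnBdry r₀ f ∧ AnalyticOnBdry r₀ X ∧
      AnalyticOnBdry r₀ (fun x => dnu D.g f x) ∧
      AnalyticOnBdry r₀ (fun x => covDnuX D.g X x) := by
  obtain ⟨V, hVdef⟩ : ∃ V : Set Vec, V = ((O ∩ {x | AnalyticAt ℝ D.g x}) ∩ {x | AnalyticAt ℝ D.pi x})
      ∩ {x | 0 < Matrix.det (Matrix.of (D.g x))} := ⟨_, rfl⟩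
  have hgc : Continuous (fun x => Matrix.det (Matrix.of (D.g x))) := by
    have hc : ∀ i j, Continuous (fun x => D.g x i j) := fun i j =>
      (continuous_apply j).comp ((continuous_apply i).comp D.g_smooth.continuous)
    simp only [Matrix.det_fin_three, Matrix.of_apply]
    fun_prop
  have hV : IsOpen V := by
    rw [hVdef]
    exact ((hO.inter (isOpen_analyticAt ℝ _)).inter (isOpen_analyticAt ℝ _)).inter
      (isOpen_lt continuous_const hgc)
  have hpd : ∀ x ∈ bdry r₀, (Matrix.of (D.g x)).PosDef := fun x hx =>
    D.g_posdef x (le_of_eq (Eq.symm hx))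
  have hbV : ∀ x ∈ bdry r₀, x ∈ V := by
    intro x hx
    have hx' : rad x = r₀ := hx
    have hm : x ∈ {x | r₀ ≤ rad x ∧ rad x < r₁} := ⟨hx'.ge, by rw [hx']; exact hr₁⟩
    rw [hVdef]
    exact ⟨⟨⟨hObdry hx, hanalytic_g x hm⟩, hanalytic_pi x hm⟩, (hpd x hx).det_pos⟩
  have G : Geo V D.g D.pi := by
    refine ⟨hV, fun i j x hx => ?_, fun i j x hx => ?_, D.g_symm, fun x hx => ?_⟩
    · rw [hVdef] at hx
      exact analyticAt_pi_iff.1 (analyticAt_pi_iff.1 hx.1.1.2 i) j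
    · rw [hVdef] at hx
      exact analyticAt_pi_iff.1 (analyticAt_pi_iff.1 hx.1.2 i) j
    · rw [hVdef] at hx
      exact hx.2
  obtain ⟨Ω, hΩdef⟩ : ∃ Ω : Set Vec, Ω = V ∩ {x | r₀ < rad x} := ⟨_, rfl⟩
  have hΩ : IsOpen Ω := by
    rw [hΩdef]; exact hV.inter (isOpen_lt continuous_const rad_cont)
  have hΩV : Ω ⊆ V := by rw [hΩdef]; exact Set.inter_subset_left
  have hΩr : Ω ⊆ {x | r₀ < rad x} := by rw [hΩdef]; exact Set.inter_subset_right
  have hΩO : Ω ⊆ O := fun x hx => by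
    have := hΩV hx
    rw [hVdef] at this
    exact this.1.1.1
  have hJ := geo_jet_closed G hΩ hΩV hΩO hΩr D.g_smooth hf hX hkid
  have hus : ∀ I, ContDiff ℝ (⊤ : ℕ∞) (unk D.g f X I) := unk_smooth D.g_smooth hf hX
  have hw : ∀ I, ContDiff ℝ (⊤ : ℕ∞) (w1 (unk D.g f X) I) := by
    rintro ⟨_ | k, I⟩
    · exact hus I
    · exact contDiff_pd (hus I) k
  have key : ∀ x₀ ∈ bdry r₀, ∀ I, LB r₀ x₀ (w1 (unk D.g f X) I) := fun x₀ hx₀ I =>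
    lb_of_jet hV hr₀ hx₀ (hbV x₀ hx₀) (fun x => by rw [hΩdef]; rfl) hw hJ I
  have kf : ∀ x₀ ∈ bdry r₀, LB r₀ x₀ f := fun x₀ hx₀ => key x₀ hx₀ (none, none)
  have kdf : ∀ x₀ ∈ bdry r₀, ∀ k, LB r₀ x₀ (fun x => pd k f x) := fun x₀ hx₀ k =>
    key x₀ hx₀ (some k, none)
  have kl : ∀ x₀ ∈ bdry r₀, ∀ b, LB r₀ x₀ (fun x => low D.g X b x) := fun x₀ hx₀ b =>
    key x₀ hx₀ (none, some b)
  have kdl : ∀ x₀ ∈ bdry r₀, ∀ k b, LB r₀ x₀ (fun x => pd k (fun y => low D.g X b y) x) :=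
    fun x₀ hx₀ k b => key x₀ hx₀ (some k, some b)
  have nhV : ∀ x₀ ∈ bdry r₀, ∀ᶠ x in 𝓝 x₀, x ∈ V := fun x₀ hx₀ => hV.mem_nhds (hbV x₀ hx₀)
  have kX : ∀ x₀ ∈ bdry r₀, ∀ i, LB r₀ x₀ (fun x => X x i) := by
    intro x₀ hx₀ i
    refine (LB.sum fun m => (LB.of_an (G.mi i m x₀ (hbV x₀ hx₀))).mul (kl x₀ hx₀ m)).congr ?_
    filter_upwards [nhV x₀ hx₀] with x hx _
    exact geo_recov G hx i
  have kdX : ∀ x₀ ∈ bdry r₀, ∀ k i, LB r₀ x₀ (fun x => pd k (fun y => X y i) x) := by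
    intro x₀ hx₀ k i
    refine (LB.sum fun m => ((LB.of_an ((G.mi i m).pd k x₀ (hbV x₀ hx₀))).mul (kl x₀ hx₀ m)).add
      ((LB.of_an (G.mi i m x₀ (hbV x₀ hx₀))).mul (kdl x₀ hx₀ k m))).congr ?_
    filter_upwards [nhV x₀ hx₀] with x hx _
    have h1 : ∀ m, DifferentiableAt ℝ (fun y => minv (D.g y) i m) x := fun m =>
      ((G.mi i m).sm x hx).diffTop
    have h2 : ∀ m, DifferentiableAt ℝ (fun y => low D.g X m y) x := fun m =>
      (low_smooth D.g_smooth hX m).contDiffAt.diffTop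
    rw [pd_congrOn (u := fun y => X y i)
      (v := fun y => ∑ m, minv (D.g y) i m * low D.g X m y) hV
      (fun y hy => (geo_recov G hy i).symm) k hx,
      pd_sum (fun m _ => (h1 m).fun_mul (h2 m))]
    exact Finset.sum_congr rfl fun m _ => (pd_mul (h1 m) (h2 m) k).symm
  have kn : ∀ x₀ ∈ bdry r₀, ∀ i, LB r₀ x₀ (fun x => nuV D.g x i) := fun x₀ hx₀ i =>
    LB.nu G hr₀ hx₀ (hbV x₀ hx₀) (hpd x₀ hx₀) i
  refine ⟨glue_scalar hr₀ kf, glue_vec hr₀ fun i x₀ hx₀ => kX x₀ hx₀ i, glue_scalar hr₀ ?_,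
    glue_vec hr₀ ?_⟩
  · intro x₀ hx₀
    exact LB.sum fun i => (kn x₀ hx₀ i).mul (kdf x₀ hx₀ i)
  · intro i x₀ hx₀
    exact LB.sum fun k => (kn x₀ hx₀ k).mul ((kdX x₀ hx₀ k i).add
      (LB.sum fun l => (LB.of_an (G.gam i k l x₀ (hbV x₀ hx₀))).mul (kX x₀ hx₀ l)))

end Fin

/-- **Lemma 5.4.**  If `(Σ,ḡ,π̄)` is analytic near and at the boundary
and `DΦ[ḡ,π̄]^*(f,X) = 0` on a neighbourhood of `∂Σ` in `Σ`, then `f`, `X`, `∂_ν f` and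
`D_ν X` are analytic on `∂Σ`. -/
theorem KIDS_boundary_regularity
    (r₀ r₁ : ℝ) (hr₀ : 0 < r₀) (hr₁ : r₀ < r₁) (D : AFData r₀)
    (hanalytic_g : AnalyticOnNhd ℝ D.g {x | r₀ ≤ rad x ∧ rad x < r₁})
    (hanalytic_pi : AnalyticOnNhd ℝ D.pi {x | r₀ ≤ rad x ∧ rad x < r₁})
    (f : Vec → ℝ) (X : Vec → Vec)
    (hf : ContDiff ℝ (⊤ : ℕ∞) f) (hX : ContDiff ℝ (⊤ : ℕ∞) X)
    -- `DΦ[ḡ,π̄]^*(f,X) = 0` on a neighbourhood `O` of `∂Σ` in `Σ`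
    (O : Set Vec) (hO : IsOpen O) (hObdry : bdry r₀ ⊆ O)
    (hkid : KIDon D.g D.pi r₀ (f, X) O) :
    AnalyticOnBdry r₀ f ∧ AnalyticOnBdry r₀ X ∧
      AnalyticOnBdry r₀ (fun x => dnu D.g f x) ∧
      AnalyticOnBdry r₀ (fun x => covDnuX D.g X x) := by
  exact kids_core r₀ r₁ hr₀ hr₁ D hanalytic_g hanalytic_pi f X hf hX O hO hObdry hkid
end
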